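/- (Theorem TN.) Suppose the restricted player uses the greedy strategy and the unrestricted player uses, for each n, an arbitrary non-stupid strategy. Then, as n → ∞, n^{−1/2}·S(T_0) converges in distribution to the centered normal distribution N(0,2), and n^{−1/2}·(S_n − S(T_0)) converges in distribution to the law of max(Z_1, Z_2, Z_3), where (Z_1,Z_2,Z_3) is a centered jointly Gaussian random vector with covariance matrix [[2,−1,−1],[−1,2,−1],[−1,−1,2]]. -/

import Mathlib

open MeasureTheory ProbabilityTheory Real Filter
open scoped ENNReal Topology

namespace RPSStrategy

/-- Moves are `Fin 3`; move `m` beats move `r` iff `m = r + 1` (cyclically). -/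
def count (h : ℕ → Fin 3 × Fin 3) (t : ℕ) (i : Fin 3) : ℕ :=
  ((Finset.range t).filter fun u => (h u).1 = i).card

/-- The greedy (optimal) single-round distribution for the restricted player, given the
counts `cnt` of her previous moves: uniform if all moves are available; probabilities
`1/3` and `2/3` on `a` and `b = a+1` if only these two are available; and the forced move
if only one is available. -/
noncomputable def greedyProb (n : ℕ) (cnt : Fin 3 → ℕ) (a : Fin 3) : ℝ≥0∞ :=
  let k := (Finset.univ.filter fun i => cnt i = n).card
  if k = 0 then 1 / 3
  else if k = 1 then
    (if cnt a = n then 0 else if cnt (a + 1) = n then 2 / 3 else 1 / 3)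
  else if k = 2 then (if cnt a < n then 1 else 0)
  else 0

/-- The joint law of the moves `(r_t, m_t)` in semi-restricted RPS over `3n` rounds, when the
restricted player plays greedily and the unrestricted player uses an arbitrary non-stupid
behavioral strategy: conditionally on any history, `r_t` has the greedy law and is independent
of `m_t`, and `m_t` never takes a value that cannot win. -/
def IsGreedyVsNonStupid {Ω : Type*} [MeasurableSpace Ω] (n : ℕ) (μ : Measure Ω)
    (r m : ℕ → Ω → Fin 3) : Prop :=
  IsProbabilityMeasure μ ∧ (∀ t, Measurable (r t)) ∧ (∀ t, Measurable (m t)) ∧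
  ∀ t, t < 3 * n → ∀ h : ℕ → Fin 3 × Fin 3,
    (∀ a b : Fin 3,
      μ ({ω | ∀ u < t, (r u ω, m u ω) = h u} ∩ {ω | r t ω = a ∧ m t ω = b})
        = greedyProb n (count h t) a
            * μ ({ω | ∀ u < t, (r u ω, m u ω) = h u} ∩ {ω | m t ω = b})) ∧
    (∀ c : Fin 3, count h t c = n → count h t (c + 1) < n → count h t (c + 2) < n →
      μ ({ω | ∀ u < t, (r u ω, m u ω) = h u} ∩ {ω | m t ω = c + 1}) = 0) ∧
    (∀ a : Fin 3, count h t a < n → count h t (a + 1) = n → count h t (a + 2) = n →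
      μ ({ω | ∀ u < t, (r u ω, m u ω) = h u} ∩ {ω | m t ω = a + 1})
        = μ {ω | ∀ u < t, (r u ω, m u ω) = h u})

/-- The score `S(t)` of the unrestricted player after `t` rounds. -/
def score {Ω : Type*} (r m : ℕ → Ω → Fin 3) (t : ℕ) (ω : Ω) : ℤ :=
  (((Finset.range t).filter fun u => m u ω = r u ω + 1).card : ℤ)
    - (((Finset.range t).filter fun u => r u ω = m u ω + 1).card : ℤ)

/-- `T0 n = 3n − 3⌈n^{2/3}⌉`. -/
noncomputable def T0 (n : ℕ) : ℕ := 3 * n - 3 * ⌈(n : ℝ) ^ ((2 : ℝ) / 3)⌉₊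

/-! ### Probability core -/

/-- The path of moves. -/
def pth {Ω : Type*} (r m : ℕ → Ω → Fin 3) (ω : Ω) : ℕ → Fin 3 × Fin 3 := fun u => (r u ω, m u ω)

/-- Extend a finite history to an infinite one. -/
def extH (t : ℕ) (h : Fin t → Fin 3 × Fin 3) : ℕ → Fin 3 × Fin 3 :=
  fun u => if hu : u < t then h ⟨u, hu⟩ else (0, 0)

lemma extH_pth {Ω : Type*} (r m : ℕ → Ω → Fin 3) (ω : Ω) (t : ℕ) :
    ∀ u < t, pth r m ω u = extH t (fun u => pth r m ω u) u := by
  intro u hu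
  simp [extH, hu]

lemma count_congr {h h' : ℕ → Fin 3 × Fin 3} {t : ℕ} (hh : ∀ u < t, h u = h' u) :
    count h t = count h' t := by
  funext i
  unfold count
  congr 1
  apply Finset.filter_congr
  intro u hu
  rw [hh u (Finset.mem_range.1 hu)]

lemma integral_comp_fintype {Ω α E : Type*} [MeasurableSpace Ω] [NormedAddCommGroup E]
    [NormedSpace ℝ E] [CompleteSpace E] [Fintype α] [MeasurableSpace α]
    [MeasurableSingletonClass α]
    (μ : Measure Ω) [IsProbabilityMeasure μ] {X : Ω → α} (hX : Measurable X) (f : α → E) :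
    ∫ ω, f (X ω) ∂μ = ∑ x, μ.real (X ⁻¹' {x}) • f x := by
  have := Measure.isProbabilityMeasure_map hX.aemeasurable (μ := μ)
  have h := integral_map (μ := μ) hX.aemeasurable (f := f)
    (Integrable.of_finite).aestronglyMeasurable
  rw [← h, integral_fintype (Integrable.of_finite)]
  refine Finset.sum_congr rfl fun x _ => ?_
  rw [map_measureReal_apply hX (measurableSet_singleton x)]

set_option linter.unusedSectionVars false

section core

variable {Ω : Type*} [MeasurableSpace Ω] {n : ℕ} {μ : Measure Ω} {r m : ℕ → Ω → Fin 3}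

lemma measurable_pth (H : IsGreedyVsNonStupid n μ r m) (u : ℕ) :
    Measurable (fun ω => pth r m ω u) :=
  (H.2.1 u).prodMk (H.2.2.1 u)

lemma measurable_dep (H : IsGreedyVsNonStupid n μ r m) {E : Type*} [MeasurableSpace E] (t : ℕ)
    (G : (ℕ → Fin 3 × Fin 3) → E)
    (hG : ∀ h h', (∀ u < t, h u = h' u) → G h = G h') :
    Measurable (fun ω => G (pth r m ω)) := by
  have h1 : (fun ω => G (pth r m ω))
      = (fun h => G (extH t h)) ∘ (fun ω => (fun u : Fin t => pth r m ω u)) := by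
    funext ω
    exact hG _ _ (extH_pth r m ω t)
  rw [h1]
  exact (measurable_of_finite _).comp
    (measurable_pi_lambda _ fun u => measurable_pth H u)

lemma integrable_dep (H : IsGreedyVsNonStupid n μ r m) {E : Type*} [NormedAddCommGroup E]
    (t : ℕ) (G : (ℕ → Fin 3 × Fin 3) → E)
    (hG : ∀ h h', (∀ u < t, h u = h' u) → G h = G h') :
    Integrable (fun ω => G (pth r m ω)) μ := by
  have := H.1
  have hm : Measurable (fun ω => (fun u : Fin t => pth r m ω u)) :=
    (measurable_pi_lambda _ fun u => measurable_pth H u)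
  have := Measure.isProbabilityMeasure_map hm.aemeasurable (μ := μ)
  have h1 : (fun ω => G (pth r m ω))
      = (fun h => G (extH t h)) ∘ (fun ω => (fun u : Fin t => pth r m ω u)) := by
    funext ω
    exact hG _ _ (extH_pth r m ω t)
  rw [h1]
  exact Integrable.comp_measurable (Integrable.of_finite) hm

lemma cyl_eq (t : ℕ) (h : Fin t → Fin 3 × Fin 3) :
    {ω | ∀ u < t, (r u ω, m u ω) = extH t h u}
      = {ω | (fun u : Fin t => pth r m ω u) = h} := by
  ext ω
  simp only [Set.mem_ofPred_eq]
  constructor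
  · intro hh
    funext u
    have := hh u u.2
    simpa [extH, pth] using this
  · rintro rfl u hu
    simp [extH, hu, pth]

lemma greedyProb_ne_top (n : ℕ) (cnt : Fin 3 → ℕ) (a : Fin 3) : greedyProb n cnt a ≠ ⊤ := by
  unfold greedyProb
  dsimp only
  split_ifs <;> simp [ENNReal.div_eq_top]

lemma step_integral (H : IsGreedyVsNonStupid n μ r m) {E : Type*} [NormedAddCommGroup E]
    [NormedSpace ℝ E] [CompleteSpace E] {t : ℕ} (ht : t < 3 * n)
    (F : (ℕ → Fin 3 × Fin 3) → Fin 3 → Fin 3 → E)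
    (hF : ∀ h h', (∀ u < t, h u = h' u) → F h = F h') :
    ∫ ω, F (pth r m ω) (r t ω) (m t ω) ∂μ
      = ∫ ω, ∑ a, (greedyProb n (count (pth r m ω) t) a).toReal • F (pth r m ω) a (m t ω) ∂μ := by
  have := H.1
  have hm : Measurable (fun ω => (fun u : Fin t => pth r m ω u)) :=
    (measurable_pi_lambda _ fun u => measurable_pth H u)
  have e1 : ∀ ω, F (pth r m ω) (r t ω) (m t ω)
      = (fun x : (Fin t → Fin 3 × Fin 3) × Fin 3 × Fin 3 => F (extH t x.1) x.2.2 x.2.1)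
        ((fun u : Fin t => pth r m ω u), m t ω, r t ω) := by
    intro ω
    simp only
    rw [hF _ _ (extH_pth r m ω t)]
  have e2 : ∀ ω, ∑ a, (greedyProb n (count (pth r m ω) t) a).toReal • F (pth r m ω) a (m t ω)
      = (fun x : (Fin t → Fin 3 × Fin 3) × Fin 3 =>
          ∑ a, (greedyProb n (count (extH t x.1) t) a).toReal • F (extH t x.1) a x.2)
        ((fun u : Fin t => pth r m ω u), m t ω) := by
    intro ω
    simp only
    rw [hF _ _ (extH_pth r m ω t), count_congr (extH_pth r m ω t)]
  rw [integral_congr_ae (ae_of_all _ e1), integral_congr_ae (ae_of_all _ e2)]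
  rw [integral_comp_fintype μ (hm.prodMk ((H.2.2.1 t).prodMk (H.2.1 t)))
      (fun x : (Fin t → Fin 3 × Fin 3) × Fin 3 × Fin 3 => F (extH t x.1) x.2.2 x.2.1),
    integral_comp_fintype μ (hm.prodMk (H.2.2.1 t)) (fun x : (Fin t → Fin 3 × Fin 3) × Fin 3 =>
          ∑ a, (greedyProb n (count (extH t x.1) t) a).toReal • F (extH t x.1) a x.2)]
  simp only [Fintype.sum_prod_type]
  refine Finset.sum_congr rfl fun h _ => Finset.sum_congr rfl fun b _ => ?_
  rw [Finset.smul_sum]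
  refine Finset.sum_congr rfl fun a _ => ?_
  have key := (H.2.2.2 t ht (extH t h)).1 a b
  rw [cyl_eq] at key
  rw [smul_smul]
  congr 1
  have s1 : ((fun ω => ((fun u : Fin t => pth r m ω u), m t ω, r t ω)) ⁻¹' {(h, b, a)})
      = {ω | (fun u : Fin t => pth r m ω u) = h} ∩ {ω | r t ω = a ∧ m t ω = b} := by
    ext ω
    simp [and_comm, and_assoc]
  have s2 : ((fun ω => ((fun u : Fin t => pth r m ω u), m t ω)) ⁻¹' {(h, b)})
      = {ω | (fun u : Fin t => pth r m ω u) = h} ∩ {ω | m t ω = b} := by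
    ext ω
    simp
  rw [s1, s2, measureReal_def, measureReal_def, key, ENNReal.toReal_mul, mul_comm]

lemma step_ae (t : ℕ)
    (Q : (ℕ → Fin 3 × Fin 3) → Fin 3 → Fin 3 → Prop)
    (hQ : ∀ h h', (∀ u < t, h u = h' u) → Q h = Q h')
    (h0 : ∀ h a b, ¬ Q h a b →
      μ ({ω | ∀ u < t, (r u ω, m u ω) = h u} ∩ {ω | r t ω = a ∧ m t ω = b}) = 0) :
    ∀ᵐ ω ∂μ, Q (pth r m ω) (r t ω) (m t ω) := by
  have : ∀ x : (Fin t → Fin 3 × Fin 3) × Fin 3 × Fin 3, ∀ᵐ ω ∂μ,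
      ¬ ((∀ u < t, (r u ω, m u ω) = extH t x.1 u) ∧ (r t ω = x.2.1 ∧ m t ω = x.2.2) ∧
        ¬ Q (extH t x.1) x.2.1 x.2.2) := by
    intro x
    by_cases hq : Q (extH t x.1) x.2.1 x.2.2
    · exact ae_of_all _ fun ω h => h.2.2 hq
    · have h1 := h0 _ _ _ hq
      rw [ae_iff]
      refine measure_mono_null ?_ h1
      intro ω hω
      simp only [not_not, Set.mem_ofPred_eq] at hω
      exact ⟨hω.1, hω.2.1⟩
  rw [← ae_all_iff] at this
  filter_upwards [this] with ω hω
  by_contra hc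
  refine hω ((fun u : Fin t => pth r m ω u), r t ω, m t ω)
    ⟨fun u hu => extH_pth r m ω t u hu, ⟨rfl, rfl⟩, ?_⟩
  rwa [← hQ _ _ (extH_pth r m ω t)]

lemma ae_greedy (H : IsGreedyVsNonStupid n μ r m) {t : ℕ} (ht : t < 3 * n) :
    ∀ᵐ ω ∂μ, greedyProb n (count (pth r m ω) t) (r t ω) ≠ 0 := by
  refine step_ae t (fun h a _ => greedyProb n (count h t) a ≠ 0) ?_ ?_
  · intro h h' hh
    simp only [count_congr hh]
  · intro h a b hq
    rw [(H.2.2.2 t ht h).1 a b, not_not.1 hq, zero_mul]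

lemma ae_two (H : IsGreedyVsNonStupid n μ r m) {t : ℕ} (ht : t < 3 * n) :
    ∀ᵐ ω ∂μ, ∀ c, count (pth r m ω) t c = n → count (pth r m ω) t (c + 1) < n →
      count (pth r m ω) t (c + 2) < n → m t ω ≠ c + 1 := by
  refine step_ae t (fun h _ b => ∀ c, count h t c = n → count h t (c + 1) < n →
      count h t (c + 2) < n → b ≠ c + 1) ?_ ?_
  · intro h h' hh
    simp only [count_congr hh]
  · intro h a b hq
    push Not at hq
    obtain ⟨c, h1, h2, h3, rfl⟩ := hq
    refine measure_mono_null ?_ ((H.2.2.2 t ht h).2.1 c h1 h2 h3)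
    rintro ω ⟨hω, hω'⟩
    exact ⟨hω, hω'.2⟩

lemma ae_one (H : IsGreedyVsNonStupid n μ r m) {t : ℕ} (ht : t < 3 * n) :
    ∀ᵐ ω ∂μ, ∀ a, count (pth r m ω) t a < n → count (pth r m ω) t (a + 1) = n →
      count (pth r m ω) t (a + 2) = n → m t ω = a + 1 := by
  have := H.1
  refine step_ae t (fun h _ b => ∀ a, count h t a < n → count h t (a + 1) = n →
      count h t (a + 2) = n → b = a + 1) ?_ ?_
  · intro h h' hh
    simp only [count_congr hh]
  · intro h x b hq
    push Not at hq
    obtain ⟨a, h1, h2, h3, hb⟩ := hq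
    have key := (H.2.2.2 t ht h).2.2 a h1 h2 h3
    have hms : MeasurableSet {ω | m t ω = a + 1} := H.2.2.1 t (measurableSet_singleton _)
    have h4 := measure_inter_add_sdiff (μ := μ) {ω | ∀ u < t, (r u ω, m u ω) = h u} hms
    rw [key] at h4
    have h5 : μ ({ω | ∀ u < t, (r u ω, m u ω) = h u} \ {ω | m t ω = a + 1}) = 0 := by
      have hfin := measure_ne_top μ {ω | ∀ u < t, (r u ω, m u ω) = h u}
      by_contra hne
      exact absurd h4 (ENNReal.lt_add_right hfin hne).ne'
    refine measure_mono_null ?_ h5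
    rintro ω ⟨hω, hω'⟩
    refine ⟨hω, fun h => hb ?_⟩
    rw [← hω'.2]
    exact h

/-- `L²` bound for martingale sums. -/
lemma mart_bound (H : IsGreedyVsNonStupid n μ r m)
    (w : ℕ → (ℕ → Fin 3 × Fin 3) → Fin 3 → Fin 3 → ℝ)
    (hw : ∀ t h h', (∀ u < t, h u = h' u) → w t h = w t h')
    (hb : ∀ t h a b, |w t h a b| ≤ 3)
    (h0 : ∀ t h b, ∑ a, (greedyProb n (count h t) a).toReal * w t h a b = 0)
    (s k : ℕ) (hk : s + k ≤ 3 * n) :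
    ∫ ω, (∑ t ∈ Finset.Ico s (s + k), w t (pth r m ω) (r t ω) (m t ω)) ^ 2 ∂μ ≤ 9 * k := by
  have := H.1
  induction k with
  | zero => simp
  | succ k ih =>
    have ih := ih (by omega)
    set W : (ℕ → Fin 3 × Fin 3) → ℝ :=
      fun h => ∑ t ∈ Finset.Ico s (s + k), w t h (h t).1 (h t).2 with hWdef
    have hW : ∀ h h', (∀ u < s + k, h u = h' u) → W h = W h' := by
      intro h h' hh
      refine Finset.sum_congr rfl fun t ht => ?_
      have := (Finset.mem_Ico.1 ht).2
      rw [hw t h h' (fun u hu => hh u (by omega)), hh t this]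
    have hsum : ∀ ω, ∑ t ∈ Finset.Ico s (s + (k + 1)), w t (pth r m ω) (r t ω) (m t ω)
        = W (pth r m ω) + w (s + k) (pth r m ω) (r (s + k) ω) (m (s + k) ω) := by
      intro ω
      rw [← add_assoc, Finset.sum_Ico_succ_top (by omega)]
      rfl
    have hsum0 : ∀ ω, ∑ t ∈ Finset.Ico s (s + k), w t (pth r m ω) (r t ω) (m t ω)
        = W (pth r m ω) := fun ω => rfl
    simp_rw [hsum0] at ih
    simp_rw [hsum]
    have hcross : ∫ ω, 2 * W (pth r m ω) *
        w (s + k) (pth r m ω) (r (s + k) ω) (m (s + k) ω) ∂μ = 0 := by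
      rw [step_integral H (by omega) (fun h a b => 2 * W h * w (s + k) h a b)]
      · have : ∀ ω, ∑ a, (greedyProb n (count (pth r m ω) (s + k)) a).toReal •
            (2 * W (pth r m ω) * w (s + k) (pth r m ω) a (m (s + k) ω)) = 0 := by
          intro ω
          have := h0 (s + k) (pth r m ω) (m (s + k) ω)
          calc ∑ a, (greedyProb n (count (pth r m ω) (s + k)) a).toReal •
            (2 * W (pth r m ω) * w (s + k) (pth r m ω) a (m (s + k) ω))
              = 2 * W (pth r m ω) * ∑ a, (greedyProb n (count (pth r m ω) (s + k)) a).toReal *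
              w (s + k) (pth r m ω) a (m (s + k) ω) := by
                simp only [smul_eq_mul, Fin.sum_univ_three]
                ring
            _ = 0 := by rw [this, mul_zero]
        simp_rw [this]
        simp
      · intro h h' hh
        funext a b
        rw [hW h h' hh, hw _ h h' hh]
    have i1 : Integrable (fun ω => W (pth r m ω) ^ 2) μ :=
      integrable_dep H (s + k) (fun h => W h ^ 2) fun h h' hh => by
        simp only [hW h h' hh]
    have hdep : ∀ h h' : ℕ → Fin 3 × Fin 3, (∀ u < s + k + 1, h u = h' u) →
        W h = W h' ∧ w (s + k) h (h (s + k)).1 (h (s + k)).2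
          = w (s + k) h' (h' (s + k)).1 (h' (s + k)).2 := by
      intro h h' hh
      refine ⟨hW h h' fun u hu => hh u (by omega), ?_⟩
      rw [hw _ h h' (fun u hu => hh u (by omega)), hh (s + k) (by omega)]
    have i2 : Integrable (fun ω => 2 * W (pth r m ω) *
        w (s + k) (pth r m ω) (r (s + k) ω) (m (s + k) ω)) μ :=
      integrable_dep H (s + k + 1)
        (fun h => 2 * W h * w (s + k) h (h (s + k)).1 (h (s + k)).2) fun h h' hh => by
          simp only [hdep h h' hh]
    have i3 : Integrable (fun ω => w (s + k) (pth r m ω) (r (s + k) ω) (m (s + k) ω) ^ 2) μ :=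
      integrable_dep H (s + k + 1)
        (fun h => w (s + k) h (h (s + k)).1 (h (s + k)).2 ^ 2) fun h h' hh => by
          simp only [hdep h h' hh]
    have h3 : ∫ ω, w (s + k) (pth r m ω) (r (s + k) ω) (m (s + k) ω) ^ 2 ∂μ ≤ 9 := by
      calc _ ≤ ∫ _, (9 : ℝ) ∂μ := by
            refine integral_mono i3 (integrable_const _) fun ω => ?_
            have := abs_le.1 (hb (s + k) (pth r m ω) (r (s + k) ω) (m (s + k) ω))
            simp only
            nlinarith
        _ = 9 := by simp
    have : ∀ ω, (W (pth r m ω) + w (s + k) (pth r m ω) (r (s + k) ω) (m (s + k) ω)) ^ 2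
        = W (pth r m ω) ^ 2 + 2 * W (pth r m ω) *
          w (s + k) (pth r m ω) (r (s + k) ω) (m (s + k) ω)
          + w (s + k) (pth r m ω) (r (s + k) ω) (m (s + k) ω) ^ 2 := fun ω => by ring
    simp_rw [this]
    have e1 := integral_add (i1.add i2) i3
    simp only [Pi.add_apply] at e1
    rw [e1, integral_add i1 i2, hcross]
    push_cast
    linarith

end core

/-! ### Pathwise analysis -/

/-- Score increment. -/
def Xi (a b : Fin 3) : ℤ := if b = a + 1 then 1 else if a = b + 1 then -1 else 0

/-- Indicator. -/
def ind (i a : Fin 3) : ℤ := if a = i then 1 else 0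

/-- All moves available. -/
def I1 (n : ℕ) (h : ℕ → Fin 3 × Fin 3) (t : ℕ) : Prop := ∀ i, count h t i < n

/-- Only `c` is exhausted. -/
def I2 (n : ℕ) (h : ℕ → Fin 3 × Fin 3) (t : ℕ) (c : Fin 3) : Prop :=
  count h t c = n ∧ count h t (c + 1) < n ∧ count h t (c + 2) < n

open Classical in
/-- Phase 1 weights. -/
noncomputable def w1 (n : ℕ) (f : Fin 3 → Fin 3 → ℤ) (t : ℕ) (h : ℕ → Fin 3 × Fin 3)
    (a b : Fin 3) : ℤ := if I1 n h t then f a b else 0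

open Classical in
/-- Phase 2 weights. -/
noncomputable def w2 (n : ℕ) (c : Fin 3) (f : Fin 3 → Fin 3 → ℤ) (t : ℕ)
    (h : ℕ → Fin 3 × Fin 3) (a b : Fin 3) : ℤ := if I2 n h t c then f a b else 0

def fL (i a _b : Fin 3) : ℤ := ind i a - ind (i + 1) a
def fV (i a _b : Fin 3) : ℤ := 3 * ind i a - 1
def fQ (c a b : Fin 3) : ℤ := if b = c + 1 then 0 else Xi a b - ind (c + 1) a
def fK (c a _b : Fin 3) : ℤ := -2 * ind (c + 1) a + ind (c + 2) a

/-- Sums along a path. -/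
def WS (w : ℕ → (ℕ → Fin 3 × Fin 3) → Fin 3 → Fin 3 → ℤ) (s t : ℕ) (h : ℕ → Fin 3 × Fin 3) : ℤ :=
  ∑ u ∈ Finset.Ico s t, w u h (h u).1 (h u).2

/-- Score along a path. -/
def sc (h : ℕ → Fin 3 × Fin 3) (t : ℕ) : ℤ := ∑ u ∈ Finset.range t, Xi (h u).1 (h u).2

lemma WS_self (w) (s : ℕ) (h) : WS w s s h = 0 := by simp [WS]

lemma WS_succ (w) {s t : ℕ} (hst : s ≤ t) (h) :
    WS w s (t + 1) h = WS w s t h + w t h (h t).1 (h t).2 := by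
  simp [WS, Finset.sum_Ico_succ_top hst]

lemma sc_succ (h) (t : ℕ) : sc h (t + 1) = sc h t + Xi (h t).1 (h t).2 := by
  simp [sc, Finset.sum_range_succ]

lemma count_zero (h i) : count h 0 i = 0 := by simp [count]

lemma count_succ (h) (t : ℕ) (i) :
    ((count h (t + 1) i : ℕ) : ℤ) = count h t i + ind i (h t).1 := by
  unfold count ind
  rw [Finset.range_add_one, Finset.filter_insert]
  split_ifs <;> simp

lemma count_sum (h : ℕ → Fin 3 × Fin 3) (t : ℕ) (c : Fin 3) :
    (count h t c : ℤ) + count h t (c + 1) + count h t (c + 2) = t := by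
  induction t with
  | zero => simp [count_zero]
  | succ t ih =>
    rw [count_succ, count_succ, count_succ]
    have : ∀ a c : Fin 3, ind c a + ind (c + 1) a + ind (c + 2) a = 1 := by decide
    have := this (h t).1 c
    push_cast
    omega

lemma score_eq {Ω : Type*} (r m : ℕ → Ω → Fin 3) (t : ℕ) (ω : Ω) :
    score r m t ω = sc (pth r m ω) t := by
  induction t with
  | zero => simp [score, sc]
  | succ t ih =>
    rw [sc_succ, ← ih]
    unfold score
    rw [Finset.range_add_one, Finset.filter_insert, Finset.filter_insert]
    have e : pth r m ω t = (r t ω, m t ω) := rfl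
    rw [e]
    have hh : ∀ a b : Fin 3, b = a + 1 → a ≠ b + 1 := by decide
    unfold Xi
    split_ifs with h1 h2 h2
    · exact absurd h2 (hh _ _ h1)
    · simp; ring
    · simp; ring
    · simp

/-- Paths which occur with probability one. -/
def Good (n : ℕ) (h : ℕ → Fin 3 × Fin 3) : Prop :=
  (∀ t ≤ 3 * n, ∀ i, count h t i ≤ n) ∧
  (∀ t < 3 * n, ∀ c, I2 n h t c → (h t).2 ≠ c + 1) ∧
  (∀ t < 3 * n, ∀ a, count h t a < n → count h t (a + 1) = n → count h t (a + 2) = n →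
    (h t).2 = a + 1)

lemma greedy_count {n : ℕ} {h : ℕ → Fin 3 × Fin 3} {t : ℕ} {a : Fin 3}
    (hp : greedyProb n (count h t) a ≠ 0) (hc : count h t a ≤ n) : count h t a < n := by
  refine lt_of_le_of_ne hc fun he => hp ?_
  unfold greedyProb
  dsimp only
  have hk : (Finset.univ.filter fun i => count h t i = n).card ≠ 0 := by
    refine (Finset.card_pos.2 ⟨a, ?_⟩).ne'
    simp [he]
  rw [if_neg hk]
  simp [he]

lemma counts_le {n : ℕ} {h : ℕ → Fin 3 × Fin 3}
    (hp : ∀ t < 3 * n, greedyProb n (count h t) (h t).1 ≠ 0) :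
    ∀ t ≤ 3 * n, ∀ i, count h t i ≤ n := by
  intro t
  induction t with
  | zero => intro _ i; simp [count_zero]
  | succ t ih =>
    intro ht i
    have h1 := ih (by omega) i
    have h2 := count_succ h t i
    unfold ind at h2
    split_ifs at h2 with he
    · have := greedy_count (hp t (by omega)) (ih (by omega) _)
      rw [he] at this
      omega
    · omega

lemma three_cases (a c : Fin 3) : a = c ∨ a = c + 1 ∨ a = c + 2 := by
  revert a c; decide

lemma ind_c (c : Fin 3) : ind c c = 1 ∧ ind (c + 1) c = 0 ∧ ind (c + 2) c = 0 ∧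
    ind c (c + 1) = 0 ∧ ind (c + 1) (c + 1) = 1 ∧ ind (c + 2) (c + 1) = 0 ∧
    ind c (c + 2) = 0 ∧ ind (c + 1) (c + 2) = 0 ∧ ind (c + 2) (c + 2) = 1 := by
  revert c; decide

lemma add_c (c : Fin 3) : c + 1 + 1 = c + 2 ∧ c + 2 + 1 = c ∧ c + 1 + 2 = c ∧ c + 2 + 2 = c + 1 := by
  revert c; decide

/-- difference of counts -/
def Df (h : ℕ → Fin 3 × Fin 3) (t : ℕ) (i : Fin 3) : ℤ := (count h t i : ℤ) - count h t (i + 1)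

lemma Df_succ (h) (t : ℕ) (i) (b) : Df h (t + 1) i = Df h t i + fL i (h t).1 b := by
  unfold Df fL
  rw [count_succ, count_succ]
  ring

/-- Drifted differences. -/
noncomputable def EE (n s t : ℕ) (h : ℕ → Fin 3 × Fin 3) (i : Fin 3) : ℤ := Df h s i + WS (w1 n (fL i)) s t h

/-- Invariant. -/
def Inv (n s t : ℕ) (h : ℕ → Fin 3 × Fin 3) : Prop :=
  (I1 n h t ∧ sc h t = sc h s + WS (w1 n Xi) s t h ∧ (∀ i, Df h t i = EE n s t h i) ∧
    ∀ c, WS (w2 n c (fQ c)) s t h = 0 ∧ WS (w2 n c (fK c)) s t h = 0)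
  ∨ (∃ c, I2 n h t c ∧ 0 ≤ EE n s t h c ∧ EE n s t h (c + 2) ≤ 0 ∧
      EE n s t h c + EE n s t h (c + 1) + EE n s t h (c + 2) = 0 ∧
      sc h t + (n - count h t (c + 1)) = sc h s + WS (w1 n Xi) s t h + EE n s t h c
        + WS (w2 n c (fQ c)) s t h ∧
      2 * ((n : ℤ) - count h t (c + 1)) - (n - count h t (c + 2))
        = 2 * EE n s t h c + EE n s t h (c + 2) + WS (w2 n c (fK c)) s t h)
  ∨ (∃ c, 0 ≤ EE n s t h c ∧ EE n s t h (c + 2) ≤ 0 ∧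
      EE n s t h c + EE n s t h (c + 1) + EE n s t h (c + 2) = 0 ∧
      (∃ a, count h t (a + 1) = n ∧ count h t (a + 2) = n) ∧
      sc h t + (3 * n - t) = sc h s + WS (w1 n Xi) s t h + EE n s t h c
        + WS (w2 n c (fQ c)) s t h
        + max 0 (-(2 * EE n s t h c + EE n s t h (c + 2) + WS (w2 n c (fK c)) s t h)))

lemma not_I2_of_I1 {n h t} (h1 : I1 n h t) (c) : ¬ I2 n h t c := by
  intro h2
  have := h1 c
  have := h2.1
  omega

lemma Inv_succ {n s t : ℕ} {h : ℕ → Fin 3 × Fin 3} (hG : Good n h) (hst : s ≤ t) (ht : t < 3 * n)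
    (hI : Inv n s t h) : Inv n s (t + 1) h := by
  obtain ⟨hle, htwo, hone⟩ := hG
  have hle' := hle (t + 1) (by omega)
  rcases hI with ⟨h1, hs, hD, hz⟩ | ⟨c, h2, hE0, hE2, hEs, hs, hq⟩ | ⟨c, hE0, hE2, hEs, ⟨a, ha1, ha2⟩, hs⟩
  · -- phase one
    have hn2 := not_I2_of_I1 h1
    have hz' : ∀ c, WS (w2 n c (fQ c)) s (t + 1) h = 0 ∧ WS (w2 n c (fK c)) s (t + 1) h = 0 := by
      intro c
      rw [WS_succ _ hst, WS_succ _ hst]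
      simp [w2, hn2, hz]
    have hs' : sc h (t + 1) = sc h s + WS (w1 n Xi) s (t + 1) h := by
      rw [WS_succ _ hst, sc_succ, hs]
      simp [w1, h1]
      ring
    have hD' : ∀ i, Df h (t + 1) i = EE n s (t + 1) h i := by
      intro i
      rw [Df_succ h t i (h t).2, hD]
      unfold EE
      rw [WS_succ _ hst]
      simp [w1, h1]
      ring
    by_cases h1' : I1 n h (t + 1)
    · exact Or.inl ⟨h1', hs', hD', hz'⟩
    · right; left
      unfold I1 at h1'
      push Not at h1'
      obtain ⟨c, hc⟩ := h1'
      have a0 := h1 c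
      have a1 := h1 (c + 1)
      have a2 := h1 (c + 2)
      have b0 := count_succ h t c
      have b1 := count_succ h t (c + 1)
      have b2 := count_succ h t (c + 2)
      have hr : (h t).1 = c := by
        by_contra hne
        have : ind c (h t).1 = 0 := by simp [ind, hne]
        omega
      rw [hr] at b0 b1 b2
      obtain ⟨i1, i2, i3, -⟩ := ind_c c
      rw [i1] at b0; rw [i2] at b1; rw [i3] at b2
      have c0 := hle' c
      obtain ⟨e1, e2, -⟩ := add_c c
      have d0 := hD' c
      have d1 := hD' (c + 1)
      have d2 := hD' (c + 2)
      unfold Df at d0 d1 d2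
      rw [e1] at d1
      rw [e2] at d2
      have z := hz' c
      refine ⟨c, ⟨by omega, by omega, by omega⟩, by omega, by omega, by omega, by omega, by omega⟩
  · -- phase two
    have hn1 : ¬ I1 n h t := fun h1 => not_I2_of_I1 h1 c h2
    have hm := htwo t ht c h2
    have hE : ∀ i, EE n s (t + 1) h i = EE n s t h i := by
      intro i
      unfold EE
      rw [WS_succ _ hst]
      simp [w1, hn1]
    have hQ1 : WS (w1 n Xi) s (t + 1) h = WS (w1 n Xi) s t h := by
      rw [WS_succ _ hst]
      simp [w1, hn1]
    have hQ2 : WS (w2 n c (fQ c)) s (t + 1) h = WS (w2 n c (fQ c)) s t h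
        + (Xi (h t).1 (h t).2 - ind (c + 1) (h t).1) := by
      rw [WS_succ _ hst]
      simp [w2, h2, fQ, hm]
    have hK : WS (w2 n c (fK c)) s (t + 1) h = WS (w2 n c (fK c)) s t h
        + (-2 * ind (c + 1) (h t).1 + ind (c + 2) (h t).1) := by
      rw [WS_succ _ hst]
      simp [w2, h2, fK]
    have hS := sc_succ h t
    have b0 := count_succ h t c
    have b1 := count_succ h t (c + 1)
    have b2 := count_succ h t (c + 2)
    have c0 := hle' c
    have c1 := hle' (c + 1)
    have c2 := hle' (c + 2)
    obtain ⟨a0, a1, a2⟩ := h2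
    have hsum := count_sum h (t + 1) c
    obtain ⟨e1, e2, e3, e4⟩ := add_c c
    have hr : (h t).1 = c + 1 ∨ (h t).1 = c + 2 := by
      rcases three_cases (h t).1 c with hr | hr | hr
      · rw [hr, (ind_c c).1] at b0
        omega
      · exact Or.inl hr
      · exact Or.inr hr
    obtain ⟨i1, i2, i3, i4, i5, i6, i7, i8, i9⟩ := ind_c c
    have key : (ind c (h t).1 = 0 ∧ ind (c + 1) (h t).1 = 1 ∧ ind (c + 2) (h t).1 = 0) ∨
        (ind c (h t).1 = 0 ∧ ind (c + 1) (h t).1 = 0 ∧ ind (c + 2) (h t).1 = 1) := by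
      rcases hr with hr | hr <;> rw [hr]
      · exact Or.inl ⟨i4, i5, i6⟩
      · exact Or.inr ⟨i7, i8, i9⟩
    by_cases hA : count h (t + 1) (c + 1) < n ∧ count h (t + 1) (c + 2) < n
    · right; left
      refine ⟨c, ⟨by omega, hA.1, hA.2⟩, ?_⟩
      rw [hE, hE, hE, hQ1, hQ2, hK]
      refine ⟨hE0, hE2, hEs, ?_, ?_⟩
      · omega
      · omega
    · right; right
      refine ⟨c, ?_⟩
      rw [hE, hE, hE, hQ1, hQ2, hK]
      refine ⟨hE0, hE2, hEs, ?_, ?_⟩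
      · by_cases hA1 : count h (t + 1) (c + 1) = n
        · refine ⟨c + 2, ?_, ?_⟩
          · rw [e2]; omega
          · rw [e4]; omega
        · refine ⟨c + 1, ?_, ?_⟩
          · rw [e1]; omega
          · rw [e3]; omega
      · push_cast at hsum ⊢
        omega
  · -- phase three
    have hsum := count_sum h t a
    have hsum' := count_sum h (t + 1) a
    have h0 : count h t a < n := by
      omega
    have hn1 : ¬ I1 n h t := by
      intro h1
      have := h1 (a + 1)
      omega
    have hn2 : ∀ c, ¬ I2 n h t c := by
      rintro c ⟨p0, p1, p2⟩
      obtain ⟨e1, e2, e3, e4⟩ := add_c a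
      rcases three_cases c a with rfl | rfl | rfl
      · omega
      · rw [e1] at p1; omega
      · rw [e4] at p2; omega
    have hm := hone t ht a h0 ha1 ha2
    have hE : ∀ i, EE n s (t + 1) h i = EE n s t h i := by
      intro i
      unfold EE
      rw [WS_succ _ hst]
      simp [w1, hn1]
    have hQ1 : WS (w1 n Xi) s (t + 1) h = WS (w1 n Xi) s t h := by
      rw [WS_succ _ hst]
      simp [w1, hn1]
    have hQ2 : ∀ f, WS (w2 n c f) s (t + 1) h = WS (w2 n c f) s t h := by
      intro f
      rw [WS_succ _ hst]
      simp [w2, hn2]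
    right; right
    refine ⟨c, ?_⟩
    rw [hE, hE, hE, hQ1, hQ2, hQ2]
    have b0 := count_succ h t a
    have b1 := count_succ h t (a + 1)
    have b2 := count_succ h t (a + 2)
    have c0 := hle' a
    have c1 := hle' (a + 1)
    have c2 := hle' (a + 2)
    obtain ⟨i1, i2, i3, i4, i5, i6, i7, i8, i9⟩ := ind_c a
    have hr : (h t).1 = a := by
      rcases three_cases (h t).1 a with hr | hr | hr
      · exact hr
      · rw [hr] at b1; omega
      · rw [hr] at b2; omega
    rw [hr] at b0 b1 b2
    refine ⟨hE0, hE2, hEs, ⟨a, by omega, by omega⟩, ?_⟩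
    have hS := sc_succ h t
    rw [hm, hr] at hS
    have : Xi a (a + 1) = 1 := by simp [Xi]
    push_cast
    omega

/-- Sum of all error terms. -/
noncomputable def Err (n s : ℕ) (h : ℕ → Fin 3 × Fin 3) : ℤ :=
  |WS (w1 n Xi) s (3 * n) h| + ∑ c, (|WS (w1 n (fL c)) s (3 * n) h|
    + |WS (w2 n c (fQ c)) s (3 * n) h| + |WS (w2 n c (fK c)) s (3 * n) h|)

lemma path_main {n s : ℕ} {h : ℕ → Fin 3 × Fin 3} (hG : Good n h) (hs : s ≤ 3 * n)
    (h1 : I1 n h s) :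
    |sc h (3 * n) - sc h s - max (Df h s 0) (max (Df h s 1) (Df h s 2))| ≤ Err n s h := by
  have hinv : ∀ k, s + k ≤ 3 * n → Inv n s (s + k) h := by
    intro k
    induction k with
    | zero =>
      intro _
      left
      refine ⟨h1, ?_, ?_, ?_⟩
      · simp [WS_self]
      · intro i; simp [EE, WS_self]
      · intro c; simp [WS_self]
    | succ k ih =>
      intro hk
      exact Inv_succ (t := s + k) hG (by omega) (by omega) (ih (by omega))
  have := hinv (3 * n - s) (by omega)
  rw [show s + (3 * n - s) = 3 * n by omega] at this
  rcases this with ⟨h1, -⟩ | ⟨c, ⟨p0, p1, p2⟩, -⟩ | ⟨c, hE0, hE2, hEs, -, hs⟩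
  · have := h1 0
    have := h1 1
    have := h1 2
    have hh := count_sum h (3 * n) 0
    simp only [zero_add] at hh
    omega
  · have hh := count_sum h (3 * n) c
    omega
  · unfold Err
    rw [Fin.sum_univ_three]
    unfold EE at *
    push_cast at hs
    obtain ⟨e1, e2, e3, e4⟩ := add_c c
    have o1 : (1 : Fin 3) + 1 = 2 := rfl
    have o2 : (1 : Fin 3) + 2 = 0 := rfl
    have o3 : (2 : Fin 3) + 1 = 0 := rfl
    have o4 : (2 : Fin 3) + 2 = 1 := rfl
    have abs1 : ∀ x : ℤ, x ≤ |x| ∧ -x ≤ |x| := fun x => ⟨le_abs_self x, neg_le_abs x⟩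
    have x1 := abs1 (WS (w1 n Xi) s (3 * n) h)
    have x2 := fun i => abs1 (WS (w1 n (fL i)) s (3 * n) h)
    have x3 := fun i => abs1 (WS (w2 n i (fQ i)) s (3 * n) h)
    have x4 := fun i => abs1 (WS (w2 n i (fK i)) s (3 * n) h)
    have x20 := x2 0
    have x21 := x2 1
    have x22 := x2 2
    have x30 := x3 0
    have x31 := x3 1
    have x32 := x3 2
    have x40 := x4 0
    have x41 := x4 1
    have x42 := x4 2
    clear x2 x3 x4 abs1
    rw [abs_le]
    have hc : c = 0 ∨ c = 1 ∨ c = 2 := by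
      have : ∀ c : Fin 3, c = 0 ∨ c = 1 ∨ c = 2 := by decide
      exact this c
    rcases hc with rfl | rfl | rfl
    · simp only [zero_add] at *
      constructor <;> omega
    · simp only [o1, o2] at *
      constructor <;> omega
    · simp only [o3, o4] at *
      constructor <;> omega

lemma path_bad {n : ℕ} {h : ℕ → Fin 3 × Fin 3} (_hG : Good n h) :
    ∀ t ≤ 3 * n, (I1 n h t ∧ ∀ i, WS (w1 n (fV i)) 0 t h = 3 * count h t i - t) ∨
      n = 0 ∨ ¬ I1 n h t ∧ ∃ i, 3 * (n : ℤ) - t ≤ WS (w1 n (fV i)) 0 t h := by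
  intro t
  induction t with
  | zero =>
    intro _
    by_cases hn : n = 0
    · exact Or.inr (Or.inl hn)
    · left
      refine ⟨fun i => by rw [count_zero]; omega, fun i => by simp [WS_self, count_zero]⟩
  | succ t ih =>
    intro ht
    rcases ih (by omega) with ⟨h1, h2⟩ | hn | ⟨h1, i, hi⟩
    · have h2' : ∀ i, WS (w1 n (fV i)) 0 (t + 1) h = 3 * count h (t + 1) i - (t + 1 : ℕ) := by
        intro i
        rw [WS_succ _ (by omega), h2, count_succ]
        simp [w1, h1, fV]
        ring
      by_cases h1' : I1 n h (t + 1)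
      · exact Or.inl ⟨h1', h2'⟩
      · right; right
        refine ⟨h1', ?_⟩
        unfold I1 at h1'
        push Not at h1'
        obtain ⟨i, hi⟩ := h1'
        refine ⟨i, ?_⟩
        rw [h2']
        omega
    · exact Or.inr (Or.inl hn)
    · right; right
      refine ⟨fun h1' => h1 fun j => ?_, i, ?_⟩
      · have h3 := h1' j
        have h4 := count_succ h t j
        unfold ind at h4
        split_ifs at h4 <;> omega
      · rw [WS_succ _ (by omega)]
        simp [w1, h1]
        omega

/-! ### Probabilistic estimates -/

lemma greedy_I1 {n : ℕ} {h : ℕ → Fin 3 × Fin 3} {t : ℕ} (h1 : I1 n h t) (a : Fin 3) :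
    (greedyProb n (count h t) a).toReal = 1 / 3 := by
  have hk : (Finset.univ.filter fun i => count h t i = n).card = 0 := by
    rw [Finset.card_eq_zero, Finset.filter_eq_empty_iff]
    intro i _
    exact (h1 i).ne
  unfold greedyProb
  dsimp only
  rw [if_pos hk]
  simp

lemma greedy_I2 {n : ℕ} {h : ℕ → Fin 3 × Fin 3} {t : ℕ} {c : Fin 3} (h2 : I2 n h t c) :
    (greedyProb n (count h t) c).toReal = 0 ∧
    (greedyProb n (count h t) (c + 1)).toReal = 1 / 3 ∧
    (greedyProb n (count h t) (c + 2)).toReal = 2 / 3 := by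
  obtain ⟨p0, p1, p2⟩ := h2
  have hk : (Finset.univ.filter fun i => count h t i = n).card = 1 := by
    rw [Finset.card_eq_one]
    refine ⟨c, ?_⟩
    ext i
    simp only [Finset.mem_filter, Finset.mem_univ, true_and, Finset.mem_singleton]
    constructor
    · intro hi
      rcases three_cases i c with rfl | rfl | rfl
      · rfl
      · omega
      · omega
    · rintro rfl
      exact p0
  obtain ⟨e1, e2, e3, e4⟩ := add_c c
  unfold greedyProb
  dsimp only
  rw [hk]
  simp [p0, p1.ne, p2.ne, e1, e2]

section est

variable {Ω : Type*} [MeasurableSpace Ω] {n : ℕ} {μ : Measure Ω} {r m : ℕ → Ω → Fin 3}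

lemma ae_good (H : IsGreedyVsNonStupid n μ r m) : ∀ᵐ ω ∂μ, Good n (pth r m ω) := by
  have a1 : ∀ᵐ ω ∂μ, ∀ t, t < 3 * n → greedyProb n (count (pth r m ω) t) (r t ω) ≠ 0 := by
    rw [ae_all_iff]
    intro t
    by_cases ht : t < 3 * n
    · filter_upwards [ae_greedy H ht] with ω hω _ using hω
    · exact ae_of_all _ fun ω h => absurd h ht
  have a2 : ∀ᵐ ω ∂μ, ∀ t, t < 3 * n → ∀ c, count (pth r m ω) t c = n →
      count (pth r m ω) t (c + 1) < n → count (pth r m ω) t (c + 2) < n → m t ω ≠ c + 1 := by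
    rw [ae_all_iff]
    intro t
    by_cases ht : t < 3 * n
    · filter_upwards [ae_two H ht] with ω hω _ using hω
    · exact ae_of_all _ fun ω h => absurd h ht
  have a3 : ∀ᵐ ω ∂μ, ∀ t, t < 3 * n → ∀ a, count (pth r m ω) t a < n →
      count (pth r m ω) t (a + 1) = n → count (pth r m ω) t (a + 2) = n → m t ω = a + 1 := by
    rw [ae_all_iff]
    intro t
    by_cases ht : t < 3 * n
    · filter_upwards [ae_one H ht] with ω hω _ using hω
    · exact ae_of_all _ fun ω h => absurd h ht
  filter_upwards [a1, a2, a3] with ω h1 h2 h3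
  exact ⟨counts_le h1, fun t ht c hc => h2 t ht c hc.1 hc.2.1 hc.2.2, h3⟩

lemma I1_congr {h h' : ℕ → Fin 3 × Fin 3} {t : ℕ} (hh : ∀ u < t, h u = h' u) :
    I1 n h t ↔ I1 n h' t := by
  unfold I1
  rw [count_congr hh]

lemma I2_congr {h h' : ℕ → Fin 3 × Fin 3} {t : ℕ} (hh : ∀ u < t, h u = h' u) (c) :
    I2 n h t c ↔ I2 n h' t c := by
  unfold I2
  rw [count_congr hh]

lemma WS_dep (w : ℕ → (ℕ → Fin 3 × Fin 3) → Fin 3 → Fin 3 → ℤ)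
    (hw : ∀ t h h', (∀ u < t, h u = h' u) → w t h = w t h') (s t : ℕ) :
    ∀ h h', (∀ u < t, h u = h' u) → WS w s t h = WS w s t h' := by
  intro h h' hh
  refine Finset.sum_congr rfl fun u hu => ?_
  have := (Finset.mem_Ico.1 hu).2
  rw [hw u h h' (fun v hv => hh v (by omega)), hh u this]

lemma w1_dep (f) : ∀ t h h', (∀ u < t, h u = h' u) → w1 n f t h = w1 n f t h' := by
  intro t h h' hh
  funext a b
  have e := I1_congr (n := n) hh
  unfold w1
  by_cases h1 : I1 n h t
  · rw [if_pos h1, if_pos (e.1 h1)]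
  · rw [if_neg h1, if_neg (fun h2 => h1 (e.2 h2))]

lemma w2_dep (c f) : ∀ t h h', (∀ u < t, h u = h' u) → w2 n c f t h = w2 n c f t h' := by
  intro t h h' hh
  funext a b
  have e := I2_congr (n := n) hh c
  unfold w2
  by_cases h1 : I2 n h t c
  · rw [if_pos h1, if_pos (e.1 h1)]
  · rw [if_neg h1, if_neg (fun h2 => h1 (e.2 h2))]

lemma WS_bound (H : IsGreedyVsNonStupid n μ r m)
    (w : ℕ → (ℕ → Fin 3 × Fin 3) → Fin 3 → Fin 3 → ℤ)
    (hw : ∀ t h h', (∀ u < t, h u = h' u) → w t h = w t h')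
    (hb : ∀ t h a b, |w t h a b| ≤ 3)
    (h0 : ∀ t h b, ∑ a, (greedyProb n (count h t) a).toReal * (w t h a b : ℝ) = 0)
    (s k : ℕ) (hk : s + k ≤ 3 * n) :
    ∫ ω, (WS w s (s + k) (pth r m ω) : ℝ) ^ 2 ∂μ ≤ 9 * k := by
  have := mart_bound H (fun t h a b => (w t h a b : ℝ))
    (fun t h h' hh => by simp only [hw t h h' hh])
    (fun t h a b => by exact_mod_cast hb t h a b) h0 s k hk
  refine le_trans (le_of_eq ?_) this
  congr 1
  funext ω
  unfold WS
  push_cast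
  rfl

lemma w1_bound (H : IsGreedyVsNonStupid n μ r m) (f : Fin 3 → Fin 3 → ℤ)
    (hb : ∀ a b, |f a b| ≤ 3) (h0 : ∀ b, ∑ a, f a b = 0)
    (s k : ℕ) (hk : s + k ≤ 3 * n) :
    ∫ ω, (WS (w1 n f) s (s + k) (pth r m ω) : ℝ) ^ 2 ∂μ ≤ 9 * k := by
  refine WS_bound H _ (w1_dep f) ?_ ?_ s k hk
  · intro t h a b
    unfold w1
    split_ifs
    · exact hb a b
    · simp
  · intro t h b
    unfold w1
    split_ifs with h1
    · simp_rw [greedy_I1 h1, ← Finset.mul_sum]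
      have := h0 b
      have h2 : ∑ a, (f a b : ℝ) = 0 := by exact_mod_cast this
      rw [h2, mul_zero]
    · simp

lemma w2_bound (H : IsGreedyVsNonStupid n μ r m) (c : Fin 3) (f : Fin 3 → Fin 3 → ℤ)
    (hb : ∀ a b, |f a b| ≤ 3) (h0 : ∀ b, f (c + 1) b + 2 * f (c + 2) b = 0)
    (s k : ℕ) (hk : s + k ≤ 3 * n) :
    ∫ ω, (WS (w2 n c f) s (s + k) (pth r m ω) : ℝ) ^ 2 ∂μ ≤ 9 * k := by
  refine WS_bound H _ (w2_dep c f) ?_ ?_ s k hk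
  · intro t h a b
    unfold w2
    split_ifs
    · exact hb a b
    · simp
  · intro t h b
    unfold w2
    split_ifs with h1
    · obtain ⟨g0, g1, g2⟩ := greedy_I2 h1
      have hs : ∀ g : Fin 3 → ℝ, ∑ a, g a = g c + g (c + 1) + g (c + 2) := by
        intro g
        have hc : c = 0 ∨ c = 1 ∨ c = 2 := by
          have : ∀ c : Fin 3, c = 0 ∨ c = 1 ∨ c = 2 := by decide
          exact this c
        have o1 : (1 : Fin 3) + 1 = 2 := rfl
        have o2 : (1 : Fin 3) + 2 = 0 := rfl
        have o3 : (2 : Fin 3) + 1 = 0 := rfl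
        have o4 : (2 : Fin 3) + 2 = 1 := rfl
        rw [Fin.sum_univ_three]
        rcases hc with rfl | rfl | rfl
        · simp
        · rw [o1, o2]; ring
        · rw [o3, o4]; ring
      rw [hs, g0, g1, g2]
      have h2 : (f (c + 1) b : ℝ) + 2 * f (c + 2) b = 0 := by exact_mod_cast h0 b
      linarith
    · simp

lemma abs_WS (H : IsGreedyVsNonStupid n μ r m)
    (w : ℕ → (ℕ → Fin 3 × Fin 3) → Fin 3 → Fin 3 → ℤ)
    (hw : ∀ t h h', (∀ u < t, h u = h' u) → w t h = w t h') (s k : ℕ)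
    (hb : ∫ ω, (WS w s (s + k) (pth r m ω) : ℝ) ^ 2 ∂μ ≤ 9 * k) :
    Integrable (fun ω => |(WS w s (s + k) (pth r m ω) : ℝ)|) μ ∧
    ∫ ω, |(WS w s (s + k) (pth r m ω) : ℝ)| ∂μ ≤ 5 * √k := by
  have := H.1
  have hd := WS_dep w hw s (s + k)
  have i1 : Integrable (fun ω => |(WS w s (s + k) (pth r m ω) : ℝ)|) μ :=
    integrable_dep H (s + k) (fun h => |(WS w s (s + k) h : ℝ)|) fun h h' hh => by
      simp only [hd h h' hh]
  have i2 : Integrable (fun ω => (WS w s (s + k) (pth r m ω) : ℝ) ^ 2) μ :=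
    integrable_dep H (s + k) (fun h => (WS w s (s + k) h : ℝ) ^ 2) fun h h' hh => by
      simp only [hd h h' hh]
  refine ⟨i1, ?_⟩
  rcases Nat.eq_zero_or_pos k with rfl | hk
  · simp [WS]
  have hk' : (0 : ℝ) < k := by exact_mod_cast hk
  have hK : 0 < √(k : ℝ) := Real.sqrt_pos.2 hk'
  have hKK : √(k : ℝ) * √(k : ℝ) = k := Real.mul_self_sqrt hk'.le
  calc ∫ ω, |(WS w s (s + k) (pth r m ω) : ℝ)| ∂μ
      ≤ ∫ ω, ((1 / (2 * √k)) * (WS w s (s + k) (pth r m ω) : ℝ) ^ 2 + √k / 2) ∂μ := by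
        refine integral_mono i1 ((i2.const_mul _).add (integrable_const _)) fun ω => ?_
        simp only
        set x := (WS w s (s + k) (pth r m ω) : ℝ)
        have h1 : 0 ≤ (|x| - √k) ^ 2 := sq_nonneg _
        have h2 : (1 / (2 * √(k : ℝ))) * x ^ 2 + √k / 2 - |x|
            = (1 / (2 * √k)) * (|x| - √k) ^ 2 := by
          rw [sub_sq, sq_abs]
          field_simp
          ring
        have h3 : 0 ≤ (1 / (2 * √(k : ℝ))) * (|x| - √k) ^ 2 := by positivity
        linarith
    _ = (1 / (2 * √k)) * ∫ ω, (WS w s (s + k) (pth r m ω) : ℝ) ^ 2 ∂μ + √k / 2 := by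
        rw [integral_add (i2.const_mul _) (integrable_const _), integral_const_mul]
        simp
    _ ≤ (1 / (2 * √k)) * (9 * k) + √k / 2 := by gcongr
    _ = 5 * √k := by
        nth_rewrite 2 [← hKK]
        field_simp
        ring

lemma Err_bound (H : IsGreedyVsNonStupid n μ r m) (s : ℕ) (hs : s ≤ 3 * n) :
    Integrable (fun ω => (Err n s (pth r m ω) : ℝ)) μ ∧
    ∫ ω, (Err n s (pth r m ω) : ℝ) ∂μ ≤ 50 * √((3 * n - s : ℕ) : ℝ) := by
  obtain ⟨k, hk⟩ : ∃ k, 3 * n = s + k := ⟨3 * n - s, by omega⟩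
  have hk2 : 3 * n - s = k := by omega
  rw [hk2]
  have hkle : s + k ≤ 3 * n := hk.ge
  have b1 := abs_WS H _ (w1_dep Xi) s k (w1_bound H Xi (by decide) (by decide) s k hkle)
  have b2 := fun c => abs_WS H _ (w1_dep (fL c)) s k
    (w1_bound H (fL c) (by revert c; decide) (by revert c; decide) s k hkle)
  have b3 := fun c => abs_WS H _ (w2_dep c (fQ c)) s k
    (w2_bound H c (fQ c) (by revert c; decide) (by revert c; decide) s k hkle)
  have b4 := fun c => abs_WS H _ (w2_dep c (fK c)) s k
    (w2_bound H c (fK c) (by revert c; decide) (by revert c; decide) s k hkle)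
  unfold Err
  rw [hk]
  push_cast
  have i5 : ∀ c, Integrable (fun ω => |(WS (w1 n (fL c)) s (s + k) (pth r m ω) : ℝ)|
      + |(WS (w2 n c (fQ c)) s (s + k) (pth r m ω) : ℝ)|
      + |(WS (w2 n c (fK c)) s (s + k) (pth r m ω) : ℝ)|) μ := fun c =>
    ((b2 c).1.add (b3 c).1).add (b4 c).1
  have i6 := integrable_finsetSum Finset.univ fun c _ => i5 c
  refine ⟨b1.1.add i6, ?_⟩
  rw [integral_add b1.1 i6, integral_finsetSum _ fun c _ => i5 c]
  have h7 : ∀ c, ∫ ω, |(WS (w1 n (fL c)) s (s + k) (pth r m ω) : ℝ)|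
      + |(WS (w2 n c (fQ c)) s (s + k) (pth r m ω) : ℝ)|
      + |(WS (w2 n c (fK c)) s (s + k) (pth r m ω) : ℝ)| ∂μ ≤ 15 * √k := by
    intro c
    have e := integral_add ((b2 c).1.add (b3 c).1) (b4 c).1
    simp only [Pi.add_apply] at e
    rw [e, integral_add (b2 c).1 (b3 c).1]
    linarith [(b2 c).2, (b3 c).2, (b4 c).2]
  have h8 := Finset.sum_le_sum fun c (_ : c ∈ Finset.univ) => h7 c
  rw [Finset.sum_const, Finset.card_univ, Fintype.card_fin, nsmul_eq_mul] at h8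
  push_cast at h8
  linarith [b1.2]

lemma measurableSet_I1 (H : IsGreedyVsNonStupid n μ r m) (T : ℕ) :
    MeasurableSet {ω | I1 n (pth r m ω) T} := by
  have := measurable_dep H T (fun h => I1 n h T) fun h h' hh => by
    simp only [I1_congr (n := n) hh]
  exact measurableSet_setOfPred.2 this

lemma bad_bound (H : IsGreedyVsNonStupid n μ r m) (hn : 1 ≤ n) (T : ℕ) (hT : T ≤ 3 * n) :
    μ.real {ω | ¬ I1 n (pth r m ω) T} * (3 * n - T) ^ 2 ≤ 27 * T := by
  have := H.1
  have b := fun i => w1_bound H (fV i) (by revert i; decide) (by revert i; decide) 0 T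
    (by omega)
  have hd := fun i => WS_dep _ (w1_dep (n := n) (fV i)) 0 (0 + T)
  have ii : ∀ i, Integrable (fun ω => (WS (w1 n (fV i)) 0 (0 + T) (pth r m ω) : ℝ) ^ 2) μ :=
    fun i => integrable_dep H (0 + T) (fun h => (WS (w1 n (fV i)) 0 (0 + T) h : ℝ) ^ 2)
      fun h h' hh => by simp only [hd i h h' hh]
  have hms : MeasurableSet {ω | ¬ I1 n (pth r m ω) T} := (measurableSet_I1 H T).compl
  have hTT : (T : ℝ) ≤ 3 * n := by exact_mod_cast hT
  calc μ.real {ω | ¬ I1 n (pth r m ω) T} * (3 * n - T) ^ 2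
      = ∫ ω, {ω | ¬ I1 n (pth r m ω) T}.indicator (fun _ => ((3 * n - T) ^ 2 : ℝ)) ω ∂μ := by
        rw [integral_indicator hms]
        simp
    _ ≤ ∫ ω, ∑ i, (WS (w1 n (fV i)) 0 (0 + T) (pth r m ω) : ℝ) ^ 2 ∂μ := by
        refine integral_mono_ae ((integrable_const _).indicator hms)
          (integrable_finsetSum _ fun i _ => ii i) ?_
        filter_upwards [ae_good H] with ω hω
        by_cases h1 : I1 n (pth r m ω) T
        · rw [Set.indicator_of_notMem (by simpa using h1)]
          exact Finset.sum_nonneg fun i _ => sq_nonneg _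
        · rw [Set.indicator_of_mem (by simpa using h1)]
          rcases path_bad hω T hT with h2 | h2 | ⟨_, i, hi⟩
          · exact absurd h2.1 h1
          · omega
          · refine le_trans ?_ (Finset.single_le_sum (f := fun i =>
              (WS (w1 n (fV i)) 0 (0 + T) (pth r m ω) : ℝ) ^ 2)
              (fun i _ => sq_nonneg _) (Finset.mem_univ i))
            have hi' : (3 * (n : ℝ) - T) ≤ (WS (w1 n (fV i)) 0 T (pth r m ω) : ℝ) := by
              exact_mod_cast hi
            simp only [zero_add]
            exact pow_le_pow_left₀ (by linarith) hi' 2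
    _ = ∑ i, ∫ ω, (WS (w1 n (fV i)) 0 (0 + T) (pth r m ω) : ℝ) ^ 2 ∂μ :=
        integral_finsetSum _ fun i _ => ii i
    _ ≤ ∑ _i : Fin 3, (9 * T : ℝ) := Finset.sum_le_sum fun i _ => b i
    _ = 27 * T := by
        simp
        ring

lemma I1_mono {h : ℕ → Fin 3 × Fin 3} {s t : ℕ} (hst : s ≤ t) (h1 : I1 n h t) : I1 n h s := by
  intro i
  refine lt_of_le_of_lt ?_ (h1 i)
  unfold count
  exact Finset.card_le_card (Finset.filter_subset_filter _ (Finset.range_subset_range.2 hst))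

open Classical in
/-- Characteristic function comparison. -/
lemma char_bound (H : IsGreedyVsNonStupid n μ r m) (f : Fin 3 → Fin 3 → ℝ) (φ : ℂ)
    (hφ1 : ‖φ‖ ≤ 1)
    (hφ : ∀ b, ∑ a, (1 / 3 : ℝ) • Complex.exp (f a b * Complex.I) = φ)
    (T : ℕ) (hT : T ≤ 3 * n) :
    ‖∫ ω, Complex.exp ((∑ u ∈ Finset.range T, f (r u ω) (m u ω) : ℝ) * Complex.I) ∂μ - φ ^ T‖
      ≤ 2 * μ.real {ω | ¬ I1 n (pth r m ω) T} := by
  have := H.1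
  let F : ℕ → (ℕ → Fin 3 × Fin 3) → ℂ := fun t h => ∏ u ∈ Finset.range t,
    (if I1 n h u then Complex.exp (f (h u).1 (h u).2 * Complex.I) else φ)
  have hFd : ∀ t h h', (∀ u < t, h u = h' u) → F t h = F t h' := by
    intro t h h' hh
    refine Finset.prod_congr rfl fun u hu => ?_
    have hu := Finset.mem_range.1 hu
    rw [hh u hu]
    have : I1 n h u ↔ I1 n h' u := I1_congr fun v hv => hh v (by omega)
    simp only [this]
  have hF1 : ∀ t h, ‖F t h‖ ≤ 1 := by
    intro t h
    simp only [F]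
    rw [norm_prod]
    refine Finset.prod_le_one (fun _ _ => norm_nonneg _) fun u _ => ?_
    split_ifs
    · rw [Complex.norm_exp_ofReal_mul_I]
    · exact hφ1
  have hEF : ∀ t ≤ 3 * n, ∫ ω, F t (pth r m ω) ∂μ = φ ^ t := by
    intro t
    induction t with
    | zero => intro _; simp [F]
    | succ t ih =>
      intro ht
      have e : ∀ ω, F (t + 1) (pth r m ω)
          = (fun h a b => F t h * (if I1 n h t then Complex.exp (f a b * Complex.I) else φ))
            (pth r m ω) (r t ω) (m t ω) := by
        intro ω
        simp only [F]
        rw [Finset.prod_range_succ]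
        rfl
      have e2 : ∫ ω, F (t + 1) (pth r m ω) ∂μ = ∫ ω, (fun h a b => F t h *
          (if I1 n h t then Complex.exp (f a b * Complex.I) else φ) - F t h * φ)
            (pth r m ω) (r t ω) (m t ω) ∂μ + ∫ ω, F t (pth r m ω) * φ ∂μ := by
        rw [← integral_add]
        · refine integral_congr_ae (ae_of_all _ fun ω => ?_)
          simp only [e]
          ring
        · exact integrable_dep H (t + 1) (fun h => F t h *
            (if I1 n h t then Complex.exp (f (h t).1 (h t).2 * Complex.I) else φ) - F t h * φ)
            fun h h' hh => by
              have hh' : ∀ u < t, h u = h' u := fun u hu => hh u (by omega)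
              rw [hFd t h h' hh', hh t (by omega)]
              simp only [I1_congr (n := n) hh']
        · exact (integrable_dep H t (F t) (hFd t)).mul_const φ
      rw [e2, step_integral H (t := t) (by omega) (fun h a b => F t h *
          (if I1 n h t then Complex.exp (f a b * Complex.I) else φ) - F t h * φ) ?_]
      · have z : ∀ ω, ∑ a, (greedyProb n (count (pth r m ω) t) a).toReal •
            (F t (pth r m ω) * (if I1 n (pth r m ω) t then
              Complex.exp (f a (m t ω) * Complex.I) else φ) - F t (pth r m ω) * φ) = 0 := by
          intro ω
          split_ifs with h1
          · simp_rw [greedy_I1 h1]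
            have h2 := hφ (m t ω)
            rw [Fin.sum_univ_three] at h2 ⊢
            simp only [Complex.real_smul] at h2 ⊢
            push_cast at h2 ⊢
            linear_combination F t (pth r m ω) * h2
          · simp
        simp only [z]
        rw [integral_mul_const, ih (by omega), pow_succ]
        simp
      · intro h h' hh
        funext a b
        rw [hFd t h h' hh]
        simp only [I1_congr (n := n) hh]
  rw [← hEF T hT]
  have i1 : Integrable (fun ω =>
      Complex.exp ((∑ u ∈ Finset.range T, f (r u ω) (m u ω) : ℝ) * Complex.I)) μ :=
    integrable_dep H T (fun h =>
      Complex.exp ((∑ u ∈ Finset.range T, f (h u).1 (h u).2 : ℝ) * Complex.I)) fun h h' hh => by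
        have : ∑ u ∈ Finset.range T, f (h u).1 (h u).2
            = ∑ u ∈ Finset.range T, f (h' u).1 (h' u).2 :=
          Finset.sum_congr rfl fun u hu => by rw [hh u (Finset.mem_range.1 hu)]
        rw [this]
  have i2 : Integrable (fun ω => F T (pth r m ω)) μ := integrable_dep H T (F T) (hFd T)
  have hms : MeasurableSet {ω | ¬ I1 n (pth r m ω) T} := (measurableSet_I1 H T).compl
  rw [← integral_sub i1 i2]
  calc _ ≤ ∫ ω, ‖Complex.exp ((∑ u ∈ Finset.range T, f (r u ω) (m u ω) : ℝ) * Complex.I)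
          - F T (pth r m ω)‖ ∂μ := norm_integral_le_integral_norm _
    _ ≤ ∫ ω, {ω | ¬ I1 n (pth r m ω) T}.indicator (fun _ => (2 : ℝ)) ω ∂μ := by
        refine integral_mono (i1.sub i2).norm ((integrable_const _).indicator hms) fun ω => ?_
        by_cases h1 : I1 n (pth r m ω) T
        · rw [Set.indicator_of_notMem (by simpa using h1)]
          have : F T (pth r m ω)
              = Complex.exp ((∑ u ∈ Finset.range T, f (r u ω) (m u ω) : ℝ) * Complex.I) := by
            push_cast
            rw [Finset.sum_mul, Complex.exp_sum]
            refine Finset.prod_congr rfl fun u hu => ?_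
            rw [if_pos (I1_mono (Finset.mem_range.1 hu).le h1)]
            rfl
          simp only [this, sub_self, norm_zero, le_refl]
        · rw [Set.indicator_of_mem (by simpa using h1)]
          refine (norm_sub_le _ _).trans ?_
          rw [Complex.norm_exp_ofReal_mul_I]
          linarith [hF1 T (pth r m ω)]
    _ = 2 * μ.real {ω | ¬ I1 n (pth r m ω) T} := by
        rw [integral_indicator hms]
        simp
        ring

end est

/-! ### Asymptotics -/

lemma norm_exp_sub_exp_le (x y : ℝ) :
    ‖Complex.exp (x * Complex.I) - Complex.exp (y * Complex.I)‖ ≤ |x - y| := by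
  have h : Complex.exp (x * Complex.I) - Complex.exp (y * Complex.I)
      = Complex.exp (y * Complex.I) * (Complex.exp (Complex.I * (x - y : ℝ)) - 1) := by
    rw [mul_sub, ← Complex.exp_add]
    push_cast
    ring_nf
  rw [h, norm_mul, Complex.norm_exp_ofReal_mul_I, one_mul]
  exact Real.norm_exp_I_mul_ofReal_sub_one_le

lemma slutsky_bound {Ω : Type*} [MeasurableSpace Ω] {n : ℕ} {μ : Measure Ω}
    {r m : ℕ → Ω → Fin 3} (H : IsGreedyVsNonStupid n μ r m) (θ : ℝ) (T : ℕ) (hT : T ≤ 3 * n) :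
    ‖∫ ω, Complex.exp ((θ * ((sc (pth r m ω) (3 * n) - sc (pth r m ω) T : ℤ) : ℝ) : ℝ)
          * Complex.I) ∂μ
      - ∫ ω, Complex.exp ((θ * ((max (Df (pth r m ω) T 0) (max (Df (pth r m ω) T 1)
          (Df (pth r m ω) T 2)) : ℤ) : ℝ) : ℝ) * Complex.I) ∂μ‖
      ≤ |θ| * (50 * √((3 * n - T : ℕ) : ℝ)) + 2 * μ.real {ω | ¬ I1 n (pth r m ω) T} := by
  have := H.1
  have hsc : ∀ t h h', (∀ u < t, h u = h' u) → sc h t = sc h' t := by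
    intro t h h' hh
    exact Finset.sum_congr rfl fun u hu => by rw [hh u (Finset.mem_range.1 hu)]
  have hDf : ∀ t h h', (∀ u < t, h u = h' u) → Df h t = Df h' t := by
    intro t h h' hh
    funext i
    unfold Df
    rw [count_congr hh]
  have i1 : Integrable (fun ω => Complex.exp ((θ * ((sc (pth r m ω) (3 * n)
      - sc (pth r m ω) T : ℤ) : ℝ) : ℝ) * Complex.I)) μ :=
    integrable_dep H (3 * n) (fun h => Complex.exp ((θ * ((sc h (3 * n)
      - sc h T : ℤ) : ℝ) : ℝ) * Complex.I)) fun h h' hh => by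
        rw [hsc (3 * n) h h' hh, hsc T h h' fun u hu => hh u (by omega)]
  have i2 : Integrable (fun ω => Complex.exp ((θ * ((max (Df (pth r m ω) T 0)
      (max (Df (pth r m ω) T 1) (Df (pth r m ω) T 2)) : ℤ) : ℝ) : ℝ) * Complex.I)) μ :=
    integrable_dep H T (fun h => Complex.exp ((θ * ((max (Df h T 0)
      (max (Df h T 1) (Df h T 2)) : ℤ) : ℝ) : ℝ) * Complex.I)) fun h h' hh => by
        rw [hDf T h h' hh]
  obtain ⟨i3, hErr⟩ := Err_bound H T hT
  have hms : MeasurableSet {ω | ¬ I1 n (pth r m ω) T} := (measurableSet_I1 H T).compl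
  have i4 : Integrable ({ω | ¬ I1 n (pth r m ω) T}.indicator (fun _ => (2 : ℝ))) μ :=
    (integrable_const _).indicator hms
  rw [← integral_sub i1 i2]
  refine (norm_integral_le_integral_norm _).trans ?_
  calc _ ≤ ∫ ω, (|θ| * (Err n T (pth r m ω) : ℝ)
        + {ω | ¬ I1 n (pth r m ω) T}.indicator (fun _ => (2 : ℝ)) ω) ∂μ := by
        refine integral_mono_ae (i1.sub i2).norm ((i3.const_mul _).add i4) ?_
        filter_upwards [ae_good H] with ω hω
        have hE : (0 : ℝ) ≤ Err n T (pth r m ω) := by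
          have : (0 : ℤ) ≤ Err n T (pth r m ω) := by
            unfold Err
            positivity
          exact_mod_cast this
        by_cases h1 : I1 n (pth r m ω) T
        · rw [Set.indicator_of_notMem (by simpa using h1), add_zero]
          refine (norm_exp_sub_exp_le _ _).trans ?_
          rw [← mul_sub, abs_mul]
          refine mul_le_mul_of_nonneg_left ?_ (abs_nonneg _)
          have := path_main hω hT h1
          exact_mod_cast this
        · rw [Set.indicator_of_mem (by simpa using h1)]
          refine (norm_sub_le _ _).trans ?_
          rw [Complex.norm_exp_ofReal_mul_I, Complex.norm_exp_ofReal_mul_I]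
          have : 0 ≤ |θ| * (Err n T (pth r m ω) : ℝ) := by positivity
          linarith
    _ = |θ| * ∫ ω, (Err n T (pth r m ω) : ℝ) ∂μ + 2 * μ.real {ω | ¬ I1 n (pth r m ω) T} := by
        rw [integral_add (i3.const_mul _) i4, integral_const_mul, integral_indicator hms]
        simp
        ring
    _ ≤ _ := by gcongr

/-- `⌈n^{2/3}⌉`. -/
noncomputable def cc (n : ℕ) : ℕ := ⌈(n : ℝ) ^ ((2 : ℝ) / 3)⌉₊

lemma cc_le {n : ℕ} (hn : 1 ≤ n) : cc n ≤ n := by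
  unfold cc
  rw [Nat.ceil_le]
  have h1 : (1 : ℝ) ≤ n := by exact_mod_cast hn
  calc (n : ℝ) ^ ((2 : ℝ) / 3) ≤ (n : ℝ) ^ (1 : ℝ) :=
        Real.rpow_le_rpow_of_exponent_le h1 (by norm_num)
    _ = n := Real.rpow_one _

lemma T0_add {n : ℕ} (hn : 1 ≤ n) : T0 n + 3 * cc n = 3 * n := by
  have := cc_le hn
  have e : T0 n = 3 * n - 3 * cc n := rfl
  omega

lemma tendsto_rpow_third :
    Tendsto (fun n : ℕ => (n : ℝ) ^ (-((1 : ℝ) / 3))) atTop (𝓝 0) :=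
  (tendsto_rpow_neg_atTop (by norm_num)).comp tendsto_natCast_atTop_atTop

lemma tendsto_cc_div : Tendsto (fun n : ℕ => (cc n : ℝ) / n) atTop (𝓝 0) := by
  have h1 : Tendsto (fun n : ℕ => (n : ℝ) ^ (-((1 : ℝ) / 3)) + 1 / (n : ℝ)) atTop (𝓝 0) := by
    have := tendsto_rpow_third.add tendsto_one_div_atTop_nhds_zero_nat
    simpa using this
  refine squeeze_zero' (Eventually.of_forall fun n => by positivity) ?_ h1
  filter_upwards [eventually_ge_atTop 1] with n hn
  have hn0 : (0 : ℝ) < n := by exact_mod_cast hn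
  have h2 : (cc n : ℝ) ≤ (n : ℝ) ^ ((2 : ℝ) / 3) + 1 :=
    (Nat.ceil_lt_add_one (by positivity)).le
  have h3 : (n : ℝ) ^ (-((1 : ℝ) / 3)) = (n : ℝ) ^ ((2 : ℝ) / 3) / n := by
    rw [show (-((1 : ℝ) / 3)) = 2 / 3 - 1 by norm_num, Real.rpow_sub_one hn0.ne']
  rw [h3, ← add_div]
  gcongr

lemma tendsto_div_cc_sq : Tendsto (fun n : ℕ => (n : ℝ) / (cc n : ℝ) ^ 2) atTop (𝓝 0) := by
  refine squeeze_zero' (Eventually.of_forall fun n => by positivity) ?_ tendsto_rpow_third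
  filter_upwards [eventually_ge_atTop 1] with n hn
  have hn0 : (0 : ℝ) < n := by exact_mod_cast hn
  have h2 : (n : ℝ) ^ ((2 : ℝ) / 3) ≤ (cc n : ℝ) := Nat.le_ceil _
  have h4 : (n : ℝ) ^ (-((1 : ℝ) / 3)) = n / ((n : ℝ) ^ ((2 : ℝ) / 3)) ^ 2 := by
    rw [← Real.rpow_natCast, ← Real.rpow_mul hn0.le]
    rw [show (-((1 : ℝ) / 3)) = 1 - (2 : ℝ) / 3 * (2 : ℕ) by norm_num, Real.rpow_sub hn0,
      Real.rpow_one]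
  rw [h4]
  gcongr

/-- One-step characteristic function. -/
noncomputable def phi (v : Fin 3 → ℝ) (n : ℕ) : ℂ :=
  ∑ j, (1 / 3 : ℝ) • Complex.exp ((v j / √n : ℝ) * Complex.I)

lemma norm_phi_le (v n) : ‖phi v n‖ ≤ 1 := by
  unfold phi
  refine (norm_sum_le _ _).trans ?_
  simp only [norm_smul, Complex.norm_exp_ofReal_mul_I]
  rw [Fin.sum_univ_three]
  norm_num

lemma tendsto_single (x : ℝ) :
    Tendsto (fun n : ℕ => (n : ℂ) * (Complex.exp ((x / √n : ℝ) * Complex.I) - 1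
      - (x / √n : ℝ) * Complex.I)) atTop (𝓝 (-(x : ℂ) ^ 2 / 2)) := by
  rw [tendsto_iff_norm_sub_tendsto_zero]
  have hlim : Tendsto (fun n : ℕ => (|x| ^ 3 * Real.exp |x|) * (1 / √(n : ℝ))) atTop (𝓝 0) := by
    have h1 : Tendsto (fun n : ℕ => 1 / √(n : ℝ)) atTop (𝓝 0) := by
      have := (Real.tendsto_sqrt_atTop.comp tendsto_natCast_atTop_atTop).inv_tendsto_atTop
        (α := ℕ)
      refine this.congr fun n => by simp
    simpa using h1.const_mul (|x| ^ 3 * Real.exp |x|)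
  refine squeeze_zero' (Eventually.of_forall fun n => norm_nonneg _) ?_ hlim
  filter_upwards [eventually_ge_atTop 1] with n hn
  have hn1 : (1 : ℝ) ≤ n := by exact_mod_cast hn
  have hn0 : (0 : ℝ) < n := by linarith
  have hs0 : 0 < √(n : ℝ) := Real.sqrt_pos.2 hn0
  have hs1 : 1 ≤ √(n : ℝ) := Real.one_le_sqrt.2 hn1
  have hss : √(n : ℝ) * √(n : ℝ) = n := Real.mul_self_sqrt hn0.le
  set z : ℂ := (x / √n : ℝ) * Complex.I with hz
  have hzn : ‖z‖ = |x| / √n := by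
    rw [hz, norm_mul, Complex.norm_I, mul_one, Complex.norm_real, Real.norm_eq_abs, abs_div,
      abs_of_pos hs0]
  have hz2 : (n : ℂ) * z ^ 2 = -(x : ℂ) ^ 2 := by
    have : ((√(n : ℝ) : ℝ) : ℂ) * (√(n : ℝ) : ℝ) = (n : ℂ) := by exact_mod_cast hss
    rw [hz, mul_pow, Complex.I_sq, ← this]
    have hs0' : ((√(n : ℝ) : ℝ) : ℂ) ≠ 0 := by exact_mod_cast hs0.ne'
    push_cast
    field_simp
  have hb := Complex.norm_exp_sub_sum_le_norm_mul_exp z 3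
  simp only [Finset.sum_range_succ, Finset.sum_range_zero, Nat.factorial] at hb
  have e : (n : ℂ) * (Complex.exp z - 1 - z) - -(x : ℂ) ^ 2 / 2
      = n * (Complex.exp z - (1 + z + z ^ 2 / 2)) := by
    rw [← hz2]
    ring
  rw [e, norm_mul, Complex.norm_natCast]
  have hb' : ‖Complex.exp z - (1 + z + z ^ 2 / 2)‖ ≤ ‖z‖ ^ 3 * Real.exp ‖z‖ := by
    refine le_trans (le_of_eq ?_) hb
    congr 2
    norm_num
  have hexp : Real.exp ‖z‖ ≤ Real.exp |x| := by
    rw [Real.exp_le_exp, hzn]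
    exact div_le_self (abs_nonneg _) hs1
  calc (n : ℝ) * ‖Complex.exp z - (1 + z + z ^ 2 / 2)‖
      ≤ n * (‖z‖ ^ 3 * Real.exp |x|) := by
        gcongr
        exact hb'.trans (by gcongr)
    _ = (|x| ^ 3 * Real.exp |x|) * (1 / √(n : ℝ)) := by
        rw [hzn]
        nth_rewrite 1 [← hss]
        field_simp

lemma tendsto_phi (v : Fin 3 → ℝ) (hv : ∑ j, v j = 0) :
    Tendsto (fun n : ℕ => (n : ℂ) * (phi v n - 1)) atTop
      (𝓝 (-((∑ j, v j ^ 2 : ℝ) : ℂ) / 6)) := by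
  have h := tendsto_finsetSum Finset.univ fun j (_ : j ∈ Finset.univ) =>
    (tendsto_single (v j)).const_mul (1 / 3 : ℂ)
  have e : ∑ j, (1 / 3 : ℂ) * (-(v j : ℂ) ^ 2 / 2) = -((∑ j, v j ^ 2 : ℝ) : ℂ) / 6 := by
    push_cast
    rw [Fin.sum_univ_three, Fin.sum_univ_three]
    ring
  rw [e] at h
  refine h.congr fun n => ?_
  unfold phi
  rw [Fin.sum_univ_three] at hv
  have hv' : (v 0 : ℂ) + v 1 + v 2 = 0 := by exact_mod_cast hv
  rw [Fin.sum_univ_three, Fin.sum_univ_three]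
  simp only [Complex.real_smul]
  push_cast
  linear_combination (-(n : ℂ) / 3 / (√(n : ℝ) : ℝ) * Complex.I) * hv'

lemma norm_one_sub_pow_le {z : ℂ} (hz : ‖z‖ ≤ 1) (k : ℕ) : ‖1 - z ^ k‖ ≤ k * ‖1 - z‖ := by
  induction k with
  | zero => simp
  | succ k ih =>
    have e : 1 - z ^ (k + 1) = (1 - z ^ k) + z ^ k * (1 - z) := by ring
    rw [e]
    refine (norm_add_le _ _).trans ?_
    rw [norm_mul, norm_pow]
    have : ‖z‖ ^ k ≤ 1 := pow_le_one₀ (norm_nonneg _) hz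
    push_cast
    nlinarith [norm_nonneg (1 - z)]

lemma tendsto_phi_pow (v : Fin 3 → ℝ) (hv : ∑ j, v j = 0) :
    Tendsto (fun n : ℕ => phi v n ^ T0 n) atTop
      (𝓝 (Complex.exp (-((∑ j, v j ^ 2 : ℝ) : ℂ) / 2))) := by
  have h1 := tendsto_phi v hv
  have h2 := (Complex.tendsto_one_add_pow_exp_of_tendsto h1).pow 3
  rw [← Complex.exp_nat_mul] at h2
  have e : ((3 : ℕ) : ℂ) * (-((∑ j, v j ^ 2 : ℝ) : ℂ) / 6) = -((∑ j, v j ^ 2 : ℝ) : ℂ) / 2 := by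
    push_cast
    ring
  rw [e] at h2
  have h3 : Tendsto (fun n : ℕ => phi v n ^ T0 n - ((1 + (phi v n - 1)) ^ n) ^ 3) atTop (𝓝 0) := by
    have h4 : Tendsto (fun n : ℕ => 3 * ((cc n : ℝ) / n) * ‖(n : ℂ) * (phi v n - 1)‖) atTop
        (𝓝 0) := by
      have := (tendsto_cc_div.const_mul 3).mul h1.norm
      simpa using this
    refine squeeze_zero_norm' ?_ h4
    filter_upwards [eventually_ge_atTop 1] with n hn
    have hn0 : (0 : ℝ) < n := by exact_mod_cast hn
    have e2 : phi v n ^ T0 n - ((1 + (phi v n - 1)) ^ n) ^ 3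
        = phi v n ^ T0 n * (1 - phi v n ^ (3 * cc n)) := by
      rw [mul_sub, ← pow_add, T0_add hn, ← pow_mul, mul_comm n 3, mul_one]
      congr 2
      ring
    rw [e2, norm_mul, norm_pow, norm_mul, Complex.norm_natCast, ← norm_neg (phi v n - 1), neg_sub]
    have h5 : ‖phi v n‖ ^ T0 n ≤ 1 := pow_le_one₀ (norm_nonneg _) (norm_phi_le v n)
    have h6 := norm_one_sub_pow_le (norm_phi_le v n) (3 * cc n)
    calc ‖phi v n‖ ^ T0 n * ‖1 - phi v n ^ (3 * cc n)‖ ≤ 1 * ((3 * cc n : ℕ) * ‖1 - phi v n‖) := by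
          gcongr
      _ = 3 * ((cc n : ℝ) / n) * (n * ‖1 - phi v n‖) := by
          push_cast
          field_simp
  have := h3.add h2
  simpa using this

lemma levy {Ω : ℕ → Type*} [∀ k, MeasurableSpace (Ω k)] (μ : ∀ k, Measure (Ω k))
    [∀ k, IsProbabilityMeasure (μ k)]
    {E : Type*} [NormedAddCommGroup E] [InnerProductSpace ℝ E] [FiniteDimensional ℝ E]
    [MeasurableSpace E] [BorelSpace E] (Y : ∀ k, Ω k → E) (hY : ∀ k, Measurable (Y k))
    (ν : Measure E) [IsProbabilityMeasure ν]
    (h : ∀ t : E, Tendsto (fun k => ∫ ω, Complex.exp ((inner ℝ (Y k ω) t : ℝ) * Complex.I) ∂(μ k))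
      atTop (𝓝 (charFun ν t))) (𝕜 : Type*) [RCLike 𝕜] (g : BoundedContinuousFunction E 𝕜) :
    Tendsto (fun k => ∫ ω, g (Y k ω) ∂(μ k)) atTop (𝓝 (∫ x, g x ∂ν)) := by
  have hp : ∀ k, IsProbabilityMeasure ((μ k).map (Y k)) := fun k =>
    Measure.isProbabilityMeasure_map (hY k).aemeasurable
  let M : ℕ → ProbabilityMeasure E := fun k => ⟨(μ k).map (Y k), hp k⟩
  let N : ProbabilityMeasure E := ⟨ν, inferInstance⟩
  have hconv : Tendsto M atTop (𝓝 N) := by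
    refine ProbabilityMeasure.tendsto_of_tendsto_charFun fun t => ?_
    refine (h t).congr fun k => ?_
    change _ = charFun ((μ k).map (Y k)) t
    rw [charFun_apply, integral_map (hY k).aemeasurable]
    exact (by fun_prop : Continuous fun x : E =>
      Complex.exp ((inner ℝ x t : ℝ) * Complex.I)).aestronglyMeasurable
  have := (ProbabilityMeasure.tendsto_iff_forall_integral_rclike_tendsto 𝕜).1 hconv g
  refine this.congr fun k => ?_
  change ∫ x, g x ∂((μ k).map (Y k)) = _
  rw [integral_map (hY k).aemeasurable g.continuous.aestronglyMeasurable]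

/-! ### Limits -/

section limits

variable {Ω : ℕ → Type*} [∀ k, MeasurableSpace (Ω k)] {μ : ∀ k, Measure (Ω k)}
  {r m : ∀ k, ℕ → Ω k → Fin 3}

lemma T0_le (n : ℕ) : T0 n ≤ 3 * n := Nat.sub_le _ _

lemma tendsto_bad (H : ∀ k, IsGreedyVsNonStupid (k + 1) (μ k) (r k) (m k)) :
    Tendsto (fun k => (μ k).real {ω | ¬ I1 (k + 1) (pth (r k) (m k) ω) (T0 (k + 1))})
      atTop (𝓝 0) := by
  have h1 : Tendsto (fun k : ℕ => 9 * (((k + 1 : ℕ) : ℝ) / (cc (k + 1) : ℝ) ^ 2)) atTop (𝓝 0) := by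
    simpa using ((tendsto_add_atTop_iff_nat 1).2 tendsto_div_cc_sq).const_mul 9
  refine squeeze_zero (fun k => measureReal_nonneg) (fun k => ?_) h1
  have hb := bad_bound (H k) (by omega) (T0 (k + 1)) (T0_le _)
  have ht := T0_add (n := k + 1) (by omega)
  have hc : 0 < cc (k + 1) := by
    unfold cc
    exact Nat.ceil_pos.2 (by positivity)
  have hc' : (0 : ℝ) < cc (k + 1) := by exact_mod_cast hc
  have ht' : (T0 (k + 1) : ℝ) + 3 * cc (k + 1) = 3 * ((k + 1 : ℕ) : ℝ) := by exact_mod_cast ht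
  have e : 3 * ((k + 1 : ℕ) : ℝ) - T0 (k + 1) = 3 * cc (k + 1) := by linarith
  rw [e] at hb
  rw [← mul_div_assoc, le_div_iff₀ (by positivity)]
  nlinarith

lemma tendsto_char (H : ∀ k, IsGreedyVsNonStupid (k + 1) (μ k) (r k) (m k))
    (f : ℕ → Fin 3 → Fin 3 → ℝ) (v : Fin 3 → ℝ) (hv : ∑ j, v j = 0)
    (hf : ∀ k b, ∑ a, (1 / 3 : ℝ) • Complex.exp (f k a b * Complex.I) = phi v (k + 1)) :
    Tendsto (fun k => ∫ ω, Complex.exp ((∑ u ∈ Finset.range (T0 (k + 1)),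
      f k (r k u ω) (m k u ω) : ℝ) * Complex.I) ∂(μ k)) atTop
      (𝓝 (Complex.exp (-((∑ j, v j ^ 2 : ℝ) : ℂ) / 2))) := by
  have h1 := (tendsto_add_atTop_iff_nat 1).2 (tendsto_phi_pow v hv)
  have h2 : Tendsto (fun k => ∫ ω, Complex.exp ((∑ u ∈ Finset.range (T0 (k + 1)),
      f k (r k u ω) (m k u ω) : ℝ) * Complex.I) ∂(μ k) - phi v (k + 1) ^ T0 (k + 1)) atTop
      (𝓝 0) := by
    rw [tendsto_zero_iff_norm_tendsto_zero]
    have h3 := (tendsto_bad H).const_mul 2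
    rw [mul_zero] at h3
    exact squeeze_zero (fun k => norm_nonneg _)
      (fun k => char_bound (H k) (f k) _ (norm_phi_le v _) (hf k) _ (T0_le _)) h3
  simpa using h2.add h1

lemma sc_congr {h h' : ℕ → Fin 3 × Fin 3} {t : ℕ} (hh : ∀ u < t, h u = h' u) :
    sc h t = sc h' t := by
  unfold sc
  exact Finset.sum_congr rfl fun u hu => by rw [hh u (Finset.mem_range.1 hu)]

lemma Df_congr {h h' : ℕ → Fin 3 × Fin 3} {t : ℕ} (hh : ∀ u < t, h u = h' u) (i) :
    Df h t i = Df h' t i := by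
  unfold Df
  rw [count_congr hh]

lemma Df_eq_sum (h : ℕ → Fin 3 × Fin 3) (t : ℕ) (i : Fin 3) :
    Df h t i = ∑ u ∈ Finset.range t, fL i (h u).1 (h u).2 := by
  induction t with
  | zero => simp [Df, count_zero]
  | succ t ih => rw [Df_succ h t i (h t).2, Finset.sum_range_succ, ih]

lemma part_one (H : ∀ k, IsGreedyVsNonStupid (k + 1) (μ k) (r k) (m k))
    (g : BoundedContinuousFunction ℝ ℝ) :
    Tendsto (fun k => ∫ ω, g ((sc (pth (r k) (m k) ω) (T0 (k + 1)) : ℝ) / √((k + 1 : ℕ) : ℝ))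
      ∂(μ k)) atTop (𝓝 (∫ x, g x ∂(gaussianReal 0 2))) := by
  have hp : ∀ k, IsProbabilityMeasure (μ k) := fun k => (H k).1
  refine levy μ (fun k ω => (sc (pth (r k) (m k) ω) (T0 (k + 1)) : ℝ) / √((k + 1 : ℕ) : ℝ))
    (fun k => measurable_dep (H k) (T0 (k + 1))
      (fun h => (sc h (T0 (k + 1)) : ℝ) / √((k + 1 : ℕ) : ℝ))
      fun h h' hh => by simp only [sc_congr hh]) _ (fun t => ?_) ℝ g
  have h := tendsto_char H (fun k a b => t * (Xi a b : ℝ) / √((k + 1 : ℕ) : ℝ)) ![t, 0, -t]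
    (by simp [Fin.sum_univ_three]) (by
      intro k b
      unfold phi
      rw [Fin.sum_univ_three, Fin.sum_univ_three]
      fin_cases b <;> simp [Xi] <;> ring)
  rw [charFun_gaussianReal]
  convert h using 2
  · congr 1
    funext ω
    congr 3
    rw [← Finset.sum_div, ← Finset.mul_sum, sc]
    simp [pth]
    ring
  · congr 1
    simp [Fin.sum_univ_three]

lemma part_two_vec (H : ∀ k, IsGreedyVsNonStupid (k + 1) (μ k) (r k) (m k))
    (t : Fin 3 → ℝ) :
    Tendsto (fun k => ∫ ω, Complex.exp ((∑ i, t i * ((Df (pth (r k) (m k) ω) (T0 (k + 1)) i : ℝ)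
        / √((k + 1 : ℕ) : ℝ)) : ℝ) * Complex.I) ∂(μ k)) atTop
      (𝓝 (Complex.exp (-((2 * (t 0 ^ 2 + t 1 ^ 2 + t 2 ^ 2)
        - 2 * (t 0 * t 1 + t 0 * t 2 + t 1 * t 2) : ℝ) : ℂ) / 2))) := by
  have h := tendsto_char H (fun k a b => (∑ i, t i * (fL i a b : ℝ)) / √((k + 1 : ℕ) : ℝ))
    ![t 0 - t 2, t 1 - t 0, t 2 - t 1]
    (by simp [Fin.sum_univ_three]) (by
      intro k b
      unfold phi
      rw [Fin.sum_univ_three, Fin.sum_univ_three]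
      simp [Fin.sum_univ_three, fL, ind]
      ring_nf)
  convert h using 2
  · congr 1
    funext ω
    congr 3
    rw [← Finset.sum_div, Finset.sum_comm, Finset.sum_div]
    refine Finset.sum_congr rfl fun i _ => ?_
    rw [Df_eq_sum, ← Finset.mul_sum]
    simp [pth]
    ring
  · congr 1
    simp [Fin.sum_univ_three]
    ring

lemma charFun_Z {Ω' : Type*} [MeasurableSpace Ω'] (P : Measure Ω') [IsProbabilityMeasure P]
    (Z1 Z2 Z3 : Ω' → ℝ)
    (hZ1 : Measurable Z1) (hZ2 : Measurable Z2) (hZ3 : Measurable Z3)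
    (hZ : ∀ a b c : ℝ, P.map (fun ω => a * Z1 ω + b * Z2 ω + c * Z3 ω)
        = gaussianReal 0 (Real.toNNReal
            (2 * (a ^ 2 + b ^ 2 + c ^ 2) - 2 * (a * b + a * c + b * c)))) (a b c : ℝ) :
    ∫ ω, Complex.exp ((a * Z1 ω + b * Z2 ω + c * Z3 ω : ℝ) * Complex.I) ∂P
      = Complex.exp (-((2 * (a ^ 2 + b ^ 2 + c ^ 2) - 2 * (a * b + a * c + b * c) : ℝ) : ℂ) / 2) := by
  have h := congrArg (fun ν => charFun ν 1) (hZ a b c)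
  rw [charFun_gaussianReal, charFun_apply_real,
    integral_map (by fun_prop) (by fun_prop)] at h
  have hn : 0 ≤ 2 * (a ^ 2 + b ^ 2 + c ^ 2) - 2 * (a * b + a * c + b * c) := by
    nlinarith [sq_nonneg (a - b), sq_nonneg (a - c), sq_nonneg (b - c)]
  rw [Real.coe_toNNReal _ hn] at h
  convert h using 1
  · simp
  · congr 1
    push_cast
    ring

/-- The function `x ↦ exp(iθ max x)`. -/
noncomputable def gmax (θ : ℝ) : BoundedContinuousFunction (EuclideanSpace ℝ (Fin 3)) ℂ :=
  BoundedContinuousFunction.ofNormedAddCommGroup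
    (fun x => Complex.exp ((θ * max (x 0) (max (x 1) (x 2)) : ℝ) * Complex.I))
    (by fun_prop) 1 (fun x => by rw [Complex.norm_exp_ofReal_mul_I])

lemma part_two_max (H : ∀ k, IsGreedyVsNonStupid (k + 1) (μ k) (r k) (m k))
    {Ω' : Type*} [MeasurableSpace Ω'] (P : Measure Ω') [IsProbabilityMeasure P]
    (Z1 Z2 Z3 : Ω' → ℝ)
    (hZ1 : Measurable Z1) (hZ2 : Measurable Z2) (hZ3 : Measurable Z3)
    (hZ : ∀ a b c : ℝ, P.map (fun ω => a * Z1 ω + b * Z2 ω + c * Z3 ω)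
        = gaussianReal 0 (Real.toNNReal
            (2 * (a ^ 2 + b ^ 2 + c ^ 2) - 2 * (a * b + a * c + b * c)))) (θ : ℝ) :
    Tendsto (fun k => ∫ ω, Complex.exp ((θ / √((k + 1 : ℕ) : ℝ)
        * ((max (Df (pth (r k) (m k) ω) (T0 (k + 1)) 0)
          (max (Df (pth (r k) (m k) ω) (T0 (k + 1)) 1)
          (Df (pth (r k) (m k) ω) (T0 (k + 1)) 2)) : ℤ) : ℝ) : ℝ) * Complex.I) ∂(μ k)) atTop
      (𝓝 (∫ ω, Complex.exp ((θ * max (Z1 ω) (max (Z2 ω) (Z3 ω)) : ℝ) * Complex.I) ∂P)) := by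
  have hp : ∀ k, IsProbabilityMeasure (μ k) := fun k => (H k).1
  let W : Ω' → EuclideanSpace ℝ (Fin 3) := fun ω => WithLp.toLp 2 ![Z1 ω, Z2 ω, Z3 ω]
  have hW : Measurable W := by
    refine (WithLp.measurable_toLp 2 _).comp (measurable_pi_lambda _ fun i => ?_)
    fin_cases i <;> simpa
  have hν : IsProbabilityMeasure (P.map W) := Measure.isProbabilityMeasure_map hW.aemeasurable
  have key := levy μ (fun k ω => (WithLp.toLp 2 (fun i =>
      (Df (pth (r k) (m k) ω) (T0 (k + 1)) i : ℝ) / √((k + 1 : ℕ) : ℝ)) :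
        EuclideanSpace ℝ (Fin 3)))
    (fun k => measurable_dep (H k) (T0 (k + 1))
      (fun h => (WithLp.toLp 2 (fun i => (Df h (T0 (k + 1)) i : ℝ) / √((k + 1 : ℕ) : ℝ)) :
        EuclideanSpace ℝ (Fin 3)))
      fun h h' hh => by simp only [Df_congr hh]) (P.map W) (fun t => by
        rw [charFun_apply, integral_map hW.aemeasurable (by fun_prop)]
        convert part_two_vec H (fun i => t i) using 2
        · congr 1
        · rw [← charFun_Z P Z1 Z2 Z3 hZ1 hZ2 hZ3 hZ (t 0) (t 1) (t 2)]
          congr 1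
          funext ω
          congr 3
          simp [W, PiLp.inner_apply, Fin.sum_univ_three]) ℂ (gmax θ)
  rw [integral_map hW.aemeasurable (gmax θ).continuous.aestronglyMeasurable] at key
  refine key.congr fun k => ?_
  congr 1
  funext ω
  have hs : (0 : ℝ) ≤ √((k + 1 : ℕ) : ℝ) := Real.sqrt_nonneg _
  simp only [gmax, BoundedContinuousFunction.coe_ofNormedAddCommGroup]
  congr 3
  rw [max_div_div_right hs, max_div_div_right hs]
  push_cast
  ring

lemma part_two (H : ∀ k, IsGreedyVsNonStupid (k + 1) (μ k) (r k) (m k))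
    {Ω' : Type*} [MeasurableSpace Ω'] (P : Measure Ω') [IsProbabilityMeasure P]
    (Z1 Z2 Z3 : Ω' → ℝ)
    (hZ1 : Measurable Z1) (hZ2 : Measurable Z2) (hZ3 : Measurable Z3)
    (hZ : ∀ a b c : ℝ, P.map (fun ω => a * Z1 ω + b * Z2 ω + c * Z3 ω)
        = gaussianReal 0 (Real.toNNReal
            (2 * (a ^ 2 + b ^ 2 + c ^ 2) - 2 * (a * b + a * c + b * c))))
    (g : BoundedContinuousFunction ℝ ℝ) :
    Tendsto (fun k => ∫ ω, g (((sc (pth (r k) (m k) ω) (3 * (k + 1))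
        - sc (pth (r k) (m k) ω) (T0 (k + 1)) : ℤ) : ℝ) / √((k + 1 : ℕ) : ℝ))
      ∂(μ k)) atTop (𝓝 (∫ ω, g (max (Z1 ω) (max (Z2 ω) (Z3 ω))) ∂P)) := by
  have hp : ∀ k, IsProbabilityMeasure (μ k) := fun k => (H k).1
  have hM : Measurable (fun ω => max (Z1 ω) (max (Z2 ω) (Z3 ω))) := by fun_prop
  have hν : IsProbabilityMeasure (P.map (fun ω => max (Z1 ω) (max (Z2 ω) (Z3 ω)))) :=
    Measure.isProbabilityMeasure_map hM.aemeasurable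
  rw [← integral_map hM.aemeasurable g.continuous.aestronglyMeasurable]
  refine levy μ (fun k ω => ((sc (pth (r k) (m k) ω) (3 * (k + 1))
        - sc (pth (r k) (m k) ω) (T0 (k + 1)) : ℤ) : ℝ) / √((k + 1 : ℕ) : ℝ))
    (fun k => measurable_dep (H k) (3 * (k + 1))
      (fun h => ((sc h (3 * (k + 1)) - sc h (T0 (k + 1)) : ℤ) : ℝ) / √((k + 1 : ℕ) : ℝ))
      fun h h' hh => by
        simp only [sc_congr hh,
          sc_congr (t := T0 (k + 1)) fun u hu => hh u (hu.trans_le (T0_le _))]) _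
    (fun θ => ?_) ℝ g
  rw [charFun_apply_real, integral_map hM.aemeasurable (by fun_prop)]
  have h1 := part_two_max H P Z1 Z2 Z3 hZ1 hZ2 hZ3 hZ θ
  have h2 : Tendsto (fun k : ℕ => |θ / √((k + 1 : ℕ) : ℝ)|
        * (50 * √((3 * (k + 1) - T0 (k + 1) : ℕ) : ℝ))
      + 2 * (μ k).real {ω | ¬ I1 (k + 1) (pth (r k) (m k) ω) (T0 (k + 1))}) atTop (𝓝 0) := by
    have e1 := (((tendsto_add_atTop_iff_nat 1).2 tendsto_cc_div).const_mul 3).sqrt.const_mul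
      (|θ| * 50)
    have e2 := e1.add ((tendsto_bad H).const_mul 2)
    simp only [mul_zero, Real.sqrt_zero, add_zero] at e2
    refine e2.congr fun k => ?_
    congr 1
    have ht := T0_add (n := k + 1) (by omega)
    have e : 3 * (k + 1) - T0 (k + 1) = 3 * cc (k + 1) := by omega
    rw [e, abs_div, abs_of_nonneg (Real.sqrt_nonneg _), ← mul_div_assoc,
      Real.sqrt_div' _ (by positivity)]
    push_cast
    ring
  have h3 : Tendsto (fun k => ∫ ω, Complex.exp ((θ / √((k + 1 : ℕ) : ℝ) *
        ((sc (pth (r k) (m k) ω) (3 * (k + 1)) - sc (pth (r k) (m k) ω) (T0 (k + 1)) : ℤ) : ℝ) : ℝ)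
          * Complex.I) ∂(μ k)
      - ∫ ω, Complex.exp ((θ / √((k + 1 : ℕ) : ℝ)
        * ((max (Df (pth (r k) (m k) ω) (T0 (k + 1)) 0)
          (max (Df (pth (r k) (m k) ω) (T0 (k + 1)) 1)
          (Df (pth (r k) (m k) ω) (T0 (k + 1)) 2)) : ℤ) : ℝ) : ℝ) * Complex.I) ∂(μ k))
      atTop (𝓝 0) := by
    rw [tendsto_zero_iff_norm_tendsto_zero]
    exact squeeze_zero (fun k => norm_nonneg _)
      (fun k => slutsky_bound (H k) (θ / √((k + 1 : ℕ) : ℝ)) (T0 (k + 1)) (T0_le _)) h2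
  have h4 := h3.add h1
  simp only [sub_add_cancel, zero_add] at h4
  convert h4 using 2
  · congr 1
    funext ω
    congr 3
    simp only [RCLike.inner_apply, conj_trivial]
    ring
  · congr 1
    funext ω
    push_cast
    rfl

end limits

/-- Theorem TN: if the restricted player plays greedily and the
unrestricted player uses, for each `n`, an arbitrary non-stupid strategy, then
`n^{-1/2}·S(T₀) ⇒ N(0,2)` and `n^{-1/2}·(S_n − S(T₀)) ⇒ max(Z₁,Z₂,Z₃)`, where `(Z₁,Z₂,Z₃)`
is a centered Gaussian vector with covariance matrix `[[2,−1,−1],[−1,2,−1],[−1,−1,2]]`. -/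
theorem greedy_vs_nonstupid_limits
    (Ω : ℕ → Type*) [∀ n, MeasurableSpace (Ω n)] (μ : ∀ n, Measure (Ω n))
    (r m : ∀ n, ℕ → Ω n → Fin 3)
    (hproc : ∀ n, 1 ≤ n → IsGreedyVsNonStupid n (μ n) (r n) (m n))
    {Ω' : Type*} [MeasurableSpace Ω'] (P : Measure Ω') [IsProbabilityMeasure P]
    (Z1 Z2 Z3 : Ω' → ℝ)
    (hZ1 : Measurable Z1) (hZ2 : Measurable Z2) (hZ3 : Measurable Z3)
    (hZ : ∀ a b c : ℝ, P.map (fun ω => a * Z1 ω + b * Z2 ω + c * Z3 ω)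
        = gaussianReal 0 (Real.toNNReal
            (2 * (a ^ 2 + b ^ 2 + c ^ 2) - 2 * (a * b + a * c + b * c)))) :
    (∀ g : BoundedContinuousFunction ℝ ℝ,
        Tendsto (fun n : ℕ =>
            ∫ ω, g ((score (r n) (m n) (T0 n) ω : ℝ) / Real.sqrt n) ∂(μ n))
          atTop (𝓝 (∫ x, g x ∂(gaussianReal 0 2)))) ∧
    (∀ g : BoundedContinuousFunction ℝ ℝ,
        Tendsto (fun n : ℕ =>
            ∫ ω, g (((score (r n) (m n) (3 * n) ω
                - score (r n) (m n) (T0 n) ω : ℤ) : ℝ) / Real.sqrt n) ∂(μ n))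
          atTop (𝓝 (∫ ω, g (max (Z1 ω) (max (Z2 ω) (Z3 ω))) ∂P))) := by
  have H : ∀ k, IsGreedyVsNonStupid (k + 1) (μ (k + 1)) (r (k + 1)) (m (k + 1)) :=
    fun k => hproc (k + 1) (by omega)
  constructor
  · intro g
    rw [← tendsto_add_atTop_iff_nat 1]
    simp only [score_eq]
    exact part_one H g
  · intro g
    rw [← tendsto_add_atTop_iff_nat 1]
    simp only [score_eq]
    exact part_two H P Z1 Z2 Z3 hZ1 hZ2 hZ3 hZ g

end RPSStrategy
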